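/- arXiv:1810.08022 — 2 statements merged into one kernel-verified Lean document; each statement's English description precedes it below -/
import Mathlib

section
/- Let q ∈ ℂ be a primitive third root of unity and set q^{1/2} := −q², so that (q^{1/2})² = q. For every integer k and every positive integer n the following identities hold in ℂ[x]: (1) d_{n,6k+1}(x,q) = 2^{⌊n/2⌋⌊(n+1)/2⌋} · [∏_{i=1}^{⌊(n+1)/2⌋}(i−1)!/(n−i)!] · ∏_{i≥0} (x/2+3i+1)_{⌊(n−4i)/2⌋}·(x/2+3i+3)_{⌊(n−4i−3)/2⌋} · ∏_{i≥0} (x/2+n−i+1/2)_{⌊(n−4i−1)/2⌋}·(x/2+n−i−1/2)_{⌊(n−4i−2)/2⌋}; (2) d_{n,6k+2}(x,q) = 2^{⌊n/2⌋⌊(n+1)/2⌋}·3^{−⌊n/2⌋}·(1−q)^n · [∏_{i=1}^{⌊(n+1)/2⌋}(i−1)!/(n−i)!] · ∏_{i≥0} (x/2+n−i)_{⌊(n−4i)/2⌋}·(x/2+n−i)_{⌊(n−4i−3)/2⌋} · ∏_{i≥0} (x/2+3i+3/2)_{⌊(n−4i−1)/2⌋}·(x/2+3i+5/2)_{⌊(n−4i−2)/2⌋};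 (3) d_{n,6k+3}(x,q) = (−q)^n·2^{⌊(n+1)/2⌋⌊(n+2)/2⌋−⌊n/2⌋} · [∏_{i=1}^{⌊(n+1)/2⌋}(i−1)!/(n−i)!] · ∏_{i≥0} (x/2+3i+2)_{⌊(n−4i−1)/2⌋}·(x/2+3i+2)_{⌊(n−4i−2)/2⌋} · ∏_{i≥0} (x/2+2⌊n/2⌋−i+1/2)_{⌊(n−4i)/2⌋}·(x/2+2⌊(n−1)/2⌋−i+3/2)_{⌊(n−4i−3)/2⌋}; (4) d_{n,6k+4}(x,q) = (q^{1/2})^{−n}·d_{n,6k+2}(x,q); (5) d_{n,6k+5}(x,q) = q^{−n}·d_{n,6k+1}(x,q); (6) d_{2n+1,6k}(x,q) = 0; (7) d_{2n,6k}(x,q) = (q^{1/2})^{n}·2^{n²}·[∏_{i=1}^{n}(i−1)!/(2n−i)!] · ∏_{i≥0} (x/2+3i+1/2)_{n−2i}·(x/2+3i+7/2)_{n−2(i+1)}·((x/2+2n−i)_{n−2i−1})². All products over i ≥ 0 are finite since Pochhammer symbols with non-positive index equal 1. -/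
open Polynomial Finset

noncomputable section

/-- The polynomial binomial coefficient binom(y, m) = y(y-1)⋯(y-m+1)/m! over a field F. -/
noncomputable def binomP (F : Type*) [Field F] (y : Polynomial F) (m : ℕ) : Polynomial F :=
  Polynomial.C ((m.factorial : F))⁻¹ * ∏ t ∈ Finset.range m, (y - (t : Polynomial F))

/-- a_m(q) for a numeric value q in a field: a_m = ∑_{l=0}^{m-1}(-q)^l for m > 0, a_0 = 0,
a_m = -∑_{l=1}^{-m}(-q)^{-l} for m < 0. -/
noncomputable def aF (F : Type*) [Field F] (q : F) (m : ℤ) : F :=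
  if 0 < m then ∑ l ∈ Finset.range m.toNat, (-q) ^ l
  else -∑ l ∈ Finset.range (-m).toNat, (-q) ^ (-(l + 1 : ℤ))

/-- d_{n,k}(x,q) ∈ F[x] for a numeric value q:
the determinant of the matrix with (1-based) (i,j) entry binom(x+i+j-2, j-1)·a_{j-i+k}(q). -/
noncomputable def dF (F : Type*) [Field F] (n : ℕ) (k : ℤ) (q : F) : Polynomial F :=
  Matrix.det (Matrix.of fun i j : Fin n =>
    binomP F (Polynomial.X + ((i : ℕ) : Polynomial F) + ((j : ℕ) : Polynomial F)) (j : ℕ) *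
      Polynomial.C (aF F q ((j : ℤ) - (i : ℤ) + k)))

/-- The Pochhammer symbol (y)_m = y(y+1)⋯(y+m-1) for m > 0, and (y)_m = 1 for m ≤ 0. -/
noncomputable def poch (y : Polynomial ℂ) (m : ℤ) : Polynomial ℂ :=
  ∏ t ∈ Finset.range m.toNat, (y + (t : Polynomial ℂ))

/-- x/2 as a polynomial. -/
noncomputable def halfX : Polynomial ℂ := Polynomial.C (2⁻¹ : ℂ) * Polynomial.X

/-- ∏_{i=1}^{⌊(n+1)/2⌋}(i-1)!/(n-i)!. -/
noncomputable def prodFact1 (n : ℕ) : ℂ :=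
  ∏ i ∈ Finset.range ((n + 1) / 2), (i.factorial : ℂ) / ((n - 1 - i).factorial : ℂ)

section
variable {F : Type*} [Field F]

/-- The bijection sending the extra point to `0`. -/
def sumEquivZero (n : ℕ) : Fin n ⊕ Unit ≃ Fin (n + 1) :=
  (Equiv.optionEquivSumPUnit (Fin n)).symm.trans (finSuccEquiv n).symm

/-- The bijection sending the extra point to the last element. -/
def sumEquivLast (n : ℕ) : Fin n ⊕ Unit ≃ Fin (n + 1) :=
  (Equiv.optionEquivSumPUnit (Fin n)).symm.trans finSuccEquivLast.symm

/-- The bijection sending the left summand to the interior and the right one to the endpoints. -/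
def sumEquivEnds (n : ℕ) : Fin n ⊕ Fin 2 ≃ Fin (n + 2) :=
  (Equiv.sumCongr (Equiv.refl _) (sumEquivZero 1).symm).trans <|
  (Equiv.sumCongr (Equiv.refl _) (Equiv.sumComm _ _)).trans <|
  (Equiv.sumAssoc (Fin n) Unit (Fin 1)).symm.trans <|
  (Equiv.sumCongr (sumEquivZero n) (Equiv.ofUnique (Fin 1) Unit)).trans (sumEquivLast (n + 1))

@[simp] lemma sumEquivZero_inr (n : ℕ) (u : Unit) : sumEquivZero n (Sum.inr u) = 0 := by
  simp [sumEquivZero]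

@[simp] lemma sumEquivZero_inl (n : ℕ) (i : Fin n) : sumEquivZero n (Sum.inl i) = i.succ := by
  simp [sumEquivZero]

@[simp] lemma sumEquivLast_inr (n : ℕ) (u : Unit) :
    sumEquivLast n (Sum.inr u) = Fin.last n := by
  simp [sumEquivLast]

@[simp] lemma sumEquivLast_inl (n : ℕ) (i : Fin n) :
    sumEquivLast n (Sum.inl i) = i.castSucc := by
  simp [sumEquivLast]

@[simp] lemma sumEquivEnds_inl (n : ℕ) (i : Fin n) :
    sumEquivEnds n (Sum.inl i) = i.succ.castSucc := by
  simp [sumEquivEnds]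

@[simp] lemma sumEquivEnds_inr_zero (n : ℕ) : sumEquivEnds n (Sum.inr 0) = 0 := by
  have h : (sumEquivZero 1).symm 0 = Sum.inr () := by
    rw [Equiv.symm_apply_eq, sumEquivZero_inr]
  simp [sumEquivEnds, h]

@[simp] lemma sumEquivEnds_inr_one (n : ℕ) : sumEquivEnds n (Sum.inr 1) = Fin.last (n + 1) := by
  have h : (sumEquivZero 1).symm 1 = Sum.inl 0 := by
    rw [Equiv.symm_apply_eq, sumEquivZero_inl]; rfl
  simp [sumEquivEnds, h]

lemma det_submatrix_two_equiv {m n : Type*} [Fintype m] [DecidableEq m] [Fintype n]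
    [DecidableEq n] (e f : n ≃ m) (A : Matrix m m F) :
    (A.submatrix e f).det = (Equiv.Perm.sign (e.symm.trans f) : ℤ) * A.det := by
  rw [← Matrix.det_permute', ← Matrix.det_submatrix_equiv_self e]
  congr 1
  ext i j
  simp

lemma det_bordered {n : ℕ} (B : Matrix (Fin n) (Fin n) F) [Invertible B]
    (M : Matrix (Fin n ⊕ Unit) (Fin n ⊕ Unit) F) (hM : M.toBlocks₁₁ = B) :
    M.det = B.det * (M (Sum.inr ()) (Sum.inr ())
      - (M.toBlocks₂₁ * ⅟B * M.toBlocks₁₂) () ()) := by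
  conv_lhs => rw [← Matrix.fromBlocks_toBlocks M, hM, Matrix.det_fromBlocks₁₁]
  simp [Matrix.toBlocks₂₂]

/-- The Desnanot–Jacobi identity for a matrix whose interior minor does not vanish. -/
lemma det_mul_det_interior {n : ℕ} (M : Matrix (Fin (n + 2)) (Fin (n + 2)) F)
    (h : (M.submatrix (fun i : Fin n => i.succ.castSucc) (fun i => i.succ.castSucc)).det ≠ 0) :
    M.det * (M.submatrix (fun i : Fin n => i.succ.castSucc) (fun i => i.succ.castSucc)).det =
      (M.submatrix Fin.castSucc Fin.castSucc).det * (M.submatrix Fin.succ Fin.succ).det -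
      (M.submatrix Fin.succ Fin.castSucc).det * (M.submatrix Fin.castSucc Fin.succ).det := by
  set B := M.submatrix (fun i : Fin n => i.succ.castSucc) (fun i : Fin n => i.succ.castSucc) with hB
  let _ : Invertible B := Matrix.invertibleOfIsUnitDet B (Ne.isUnit h)
  set ε : ℤ := (Equiv.Perm.sign ((sumEquivZero n).symm.trans (sumEquivLast n)) : ℤ) with hε
  have hε2 : (ε : F) * ε = 1 := by
    rw [← Int.cast_mul, hε, ← Units.val_mul, Int.units_mul_self]; simp
  have hε' : (Equiv.Perm.sign ((sumEquivLast n).symm.trans (sumEquivZero n)) : ℤ) = ε := by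
    rw [hε, ← Equiv.Perm.sign_inv]; rfl
  have h00 := det_bordered B ((M.submatrix Fin.castSucc Fin.castSucc).submatrix
    (sumEquivZero n) (sumEquivZero n)) (by ext i j; simp [Matrix.toBlocks₁₁, hB])
  have hLL := det_bordered B ((M.submatrix Fin.succ Fin.succ).submatrix
    (sumEquivLast n) (sumEquivLast n)) (by ext i j; simp [Matrix.toBlocks₁₁, hB])
  have h0L := det_bordered B ((M.submatrix Fin.castSucc Fin.succ).submatrix
    (sumEquivZero n) (sumEquivLast n)) (by ext i j; simp [Matrix.toBlocks₁₁, hB])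
  have hL0 := det_bordered B ((M.submatrix Fin.succ Fin.castSucc).submatrix
    (sumEquivLast n) (sumEquivZero n)) (by ext i j; simp [Matrix.toBlocks₁₁, hB])
  rw [Matrix.det_submatrix_equiv_self] at h00 hLL
  rw [det_submatrix_two_equiv] at h0L hL0
  rw [hε'] at hL0
  rw [← hε] at h0L
  have hM : M.det = (M.submatrix (sumEquivEnds n) (sumEquivEnds n)).det :=
    (Matrix.det_submatrix_equiv_self _ _).symm
  rw [← Matrix.fromBlocks_toBlocks (M.submatrix (sumEquivEnds n) (sumEquivEnds n)),
    show (M.submatrix (sumEquivEnds n) (sumEquivEnds n)).toBlocks₁₁ = B by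
      ext i j; simp [Matrix.toBlocks₁₁, hB], Matrix.det_fromBlocks₁₁, Matrix.det_fin_two] at hM
  have hmix : (M.submatrix Fin.succ Fin.castSucc).det * (M.submatrix Fin.castSucc Fin.succ).det =
      (ε * (M.submatrix Fin.succ Fin.castSucc).det) *
        (ε * (M.submatrix Fin.castSucc Fin.succ).det) := by
    linear_combination (-(M.submatrix Fin.succ Fin.castSucc).det *
      (M.submatrix Fin.castSucc Fin.succ).det) * hε2
  rw [hmix, h00, hLL, h0L, hL0, hM]
  simp only [Matrix.sub_apply, Matrix.mul_apply, Matrix.toBlocks₁₂, Matrix.toBlocks₂₁,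
    Matrix.toBlocks₂₂, Matrix.of_apply, Matrix.submatrix_apply, sumEquivEnds_inl,
    sumEquivEnds_inr_zero, sumEquivEnds_inr_one, sumEquivZero_inl, sumEquivZero_inr,
    sumEquivLast_inl, sumEquivLast_inr, Fin.succ_castSucc, Fin.castSucc_zero, Fin.succ_last]
  ring
end

/-- The value of the binomial coefficient `binom(x+i+j, j)`. -/
def binVal (x : ℂ) (i j : ℕ) : ℂ := (∏ t ∈ range j, (x + i + 1 + t)) / (j.factorial : ℂ)

/-- The value of `d_{n,k}(x,q)` at a complex number `x`. -/
def dVal (q : ℂ) (n : ℕ) (k : ℤ) (x : ℂ) : ℂ :=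
  Matrix.det (Matrix.of fun i j : Fin n => binVal x i j * aF ℂ q ((j : ℤ) - (i : ℤ) + k))

lemma eval_dF (q : ℂ) (n : ℕ) (k : ℤ) (x : ℂ) : (dF ℂ n k q).eval x = dVal q n k x := by
  rw [dF, dVal, ← Polynomial.coe_evalRingHom, RingHom.map_det]
  congr 1
  ext i j
  simp only [RingHom.mapMatrix_apply, Matrix.map_apply, Matrix.of_apply, binomP, binVal,
    Polynomial.coe_evalRingHom, eval_mul, eval_C, eval_prod, eval_sub, eval_add, eval_X,
    eval_natCast]
  rw [← Finset.prod_range_reflect, div_eq_inv_mul]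
  congr 2
  refine Finset.prod_congr rfl fun t ht => ?_
  have := Finset.mem_range.1 ht
  have h : (((j : ℕ) - 1 - t : ℕ) : ℂ) = (j : ℕ) - 1 - t := by
    rw [Nat.cast_sub (by omega), Nat.cast_sub (by omega)]; simp
  rw [h]; ring

lemma binVal_succ_left (x : ℂ) (i j : ℕ) : binVal x (i + 1) j = binVal (x + 1) i j := by
  simp only [binVal]; push_cast
  congr 1
  exact Finset.prod_congr rfl fun t _ => by ring

lemma binVal_succ_right (x : ℂ) (i j : ℕ) :
    binVal x i (j + 1) = ((j : ℂ) + 1)⁻¹ * ((x + 1 + i) * binVal (x + 1) i j) := by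
  have h : ((j : ℂ) + 1) ≠ 0 := by exact_mod_cast Nat.succ_ne_zero j
  have h' : (j.factorial : ℂ) ≠ 0 := by exact_mod_cast j.factorial_ne_zero
  simp only [binVal, Finset.prod_range_succ', Nat.factorial_succ]
  rw [Finset.prod_congr rfl fun t _ => show x + i + 1 + ((t + 1 : ℕ) : ℂ) = x + 1 + i + 1 + t by
    push_cast; ring]
  push_cast
  field_simp
  ring

lemma det_scale {n : ℕ} (u v : Fin n → ℂ) (A : Matrix (Fin n) (Fin n) ℂ) :
    (Matrix.of fun i j => u i * (v j * A i j)).det = (∏ i, u i) * ((∏ i, v i) * A.det) := by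
  rw [← Matrix.det_mul_row v A, ← Matrix.det_mul_column]; rfl

lemma dVal_minor_right (q : ℂ) (n : ℕ) (k : ℤ) (x : ℂ) :
    (Matrix.of fun i j : Fin n => binVal x i (j + 1) * aF ℂ q ((j : ℤ) - (i : ℤ) + k)).det =
      (∏ t ∈ range n, (x + 1 + t)) * ((∏ t ∈ range n, ((t : ℂ) + 1)⁻¹) * dVal q n k (x + 1)) := by
  rw [← Fin.prod_univ_eq_prod_range (fun t => x + 1 + (t : ℂ)),
    ← Fin.prod_univ_eq_prod_range (fun t => ((t : ℂ) + 1)⁻¹), dVal, ← det_scale]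
  congr 1
  ext i j
  simp only [Matrix.of_apply, binVal_succ_right]
  ring

lemma dVal_recurrence (q : ℂ) (n : ℕ) (k : ℤ) (x : ℂ) (hx : ∀ a : ℤ, x ≠ a)
    (h0 : dVal q n k (x + 2) ≠ 0) :
    (n + 1) * dVal q (n + 2) k x * dVal q n k (x + 2) =
      (x + n + 2) * dVal q (n + 1) k x * dVal q (n + 1) k (x + 2) -
      (x + 1) * dVal q (n + 1) (k - 1) (x + 1) * dVal q (n + 1) (k + 1) (x + 1) := by
  have hx' (t : ℕ) (b : ℕ) : x + b + t ≠ 0 := fun h => hx (-(b + t)) (by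
    push_cast; linear_combination h)
  have hP (m : ℕ) (b : ℕ) : ∏ t ∈ range m, (x + b + t) ≠ 0 :=
    Finset.prod_ne_zero_iff.2 fun t _ => hx' t b
  have hI (m : ℕ) : ∏ t ∈ range m, ((t : ℂ) + 1)⁻¹ ≠ 0 :=
    Finset.prod_ne_zero_iff.2 fun t _ => inv_ne_zero (by exact_mod_cast Nat.succ_ne_zero t)
  set M : Matrix (Fin (n + 2)) (Fin (n + 2)) ℂ :=
    Matrix.of fun i j => binVal x i j * aF ℂ q ((j : ℤ) - (i : ℤ) + k) with hM
  have e0 : (M.submatrix (fun i : Fin n => i.succ.castSucc) (fun i => i.succ.castSucc)).det =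
      (∏ t ∈ range n, (x + 2 + t)) * ((∏ t ∈ range n, ((t : ℂ) + 1)⁻¹) * dVal q n k (x + 2)) := by
    have := dVal_minor_right q n k (x + 1)
    rw [show x + 1 + 1 = x + 2 by ring] at this
    rw [← this]
    congr 1
    ext i j
    simp [hM, ← binVal_succ_left]
  have e1 : (M.submatrix Fin.castSucc Fin.castSucc).det = dVal q (n + 1) k x := by
    rw [dVal]; congr 1
  have e2 : (M.submatrix Fin.succ Fin.succ).det = (∏ t ∈ range (n + 1), (x + 2 + t)) *
      ((∏ t ∈ range (n + 1), ((t : ℂ) + 1)⁻¹) * dVal q (n + 1) k (x + 2)) := by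
    have := dVal_minor_right q (n + 1) k (x + 1)
    rw [show x + 1 + 1 = x + 2 by ring] at this
    rw [← this]
    congr 1
    ext i j
    simp [hM, ← binVal_succ_left]
  have e3 : (M.submatrix Fin.succ Fin.castSucc).det = dVal q (n + 1) (k - 1) (x + 1) := by
    rw [dVal]; congr 1
    ext i j
    simp only [hM, Matrix.submatrix_apply, Matrix.of_apply, ← binVal_succ_left, Fin.val_succ,
      Fin.val_castSucc]
    congr 2; push_cast; ring
  have e4 : (M.submatrix Fin.castSucc Fin.succ).det = (∏ t ∈ range (n + 1), (x + 1 + t)) *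
      ((∏ t ∈ range (n + 1), ((t : ℂ) + 1)⁻¹) * dVal q (n + 1) (k + 1) (x + 1)) := by
    rw [← dVal_minor_right]; congr 1
    ext i j
    simp only [hM, Matrix.submatrix_apply, Matrix.of_apply, Fin.val_succ, Fin.val_castSucc]
    congr 2; push_cast; ring
  have key := det_mul_det_interior M (by
    rw [e0]; exact mul_ne_zero (by simpa using hP n 2) (mul_ne_zero (hI n) h0))
  rw [e0, e1, e2, e3, e4, show M.det = dVal q (n + 2) k x from rfl] at key
  have hs : ∏ t ∈ range (n + 1), (x + 1 + t) = (x + 1) * ∏ t ∈ range n, (x + 2 + t) := by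
    rw [Finset.prod_range_succ', mul_comm]
    congr 1
    · simp
    · exact Finset.prod_congr rfl fun t _ => by push_cast; ring
  rw [hs, Finset.prod_range_succ (fun t : ℕ => x + 2 + (t : ℂ)),
    Finset.prod_range_succ (fun t : ℕ => ((t : ℂ) + 1)⁻¹)] at key
  have hn : (n : ℂ) + 1 ≠ 0 := by exact_mod_cast Nat.succ_ne_zero n
  have h2 := hP n 2
  have h3 := hI n
  push_cast at h2
  generalize ∏ t ∈ range n, (x + 2 + (t : ℂ)) = P at key h2
  generalize ∏ t ∈ range n, ((t : ℂ) + 1)⁻¹ = R at key h3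
  apply mul_left_cancel₀ (mul_ne_zero h2 h3)
  field_simp at key
  linear_combination (P * R) * key

lemma one_add_mul_aF {q : ℂ} (hq : q ≠ 0) (m : ℤ) :
    (1 + q) * aF ℂ q m = 1 - (-q) ^ m := by
  have hq' : -q ≠ 0 := neg_ne_zero.2 hq
  rw [aF]
  split_ifs with h
  · obtain ⟨N, rfl⟩ := Int.eq_ofNat_of_zero_le h.le
    have := geom_sum_mul (-q) N
    rw [Int.toNat_natCast, zpow_natCast]
    linear_combination -this
  · obtain ⟨N, hN⟩ := Int.eq_ofNat_of_zero_le (show 0 ≤ -m by omega)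
    obtain rfl : m = -(N : ℤ) := by omega
    rw [neg_neg, Int.toNat_natCast]
    clear hN h
    induction N with
    | zero => simp
    | succ N ih =>
      rw [Finset.sum_range_succ, neg_add, mul_add, ih]
      have h1 : (-q) ^ (-(N : ℤ)) = (-q) ^ (-((N : ℤ) + 1)) * (-q) := by
        rw [← zpow_add_one₀ hq']; congr 1; ring
      push_cast
      rw [h1]
      ring

lemma IsPrimitiveRoot.sq_add_self_add_one {q : ℂ} (hq : IsPrimitiveRoot q 3) : q ^ 2 + q + 1 = 0 := by
  have h1 : q - 1 ≠ 0 := sub_ne_zero.2 (hq.ne_one (by norm_num))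
  apply mul_left_cancel₀ h1
  linear_combination hq.pow_eq_one

lemma IsPrimitiveRoot.one_add_ne_zero {q : ℂ} (hq : IsPrimitiveRoot q 3) : 1 + q ≠ 0 := fun h => by
  have h0 := hq.ne_zero (by norm_num)
  have h1 := hq.sq_add_self_add_one
  exact h0 (pow_eq_zero_iff (two_ne_zero) |>.1 (by linear_combination h1 - h))

lemma aF_eq {q : ℂ} (hq : IsPrimitiveRoot q 3) (m : ℤ) : aF ℂ q m = (1 - (-q) ^ m) / (1 + q) := by
  rw [eq_div_iff hq.one_add_ne_zero, mul_comm, one_add_mul_aF (hq.ne_zero (by norm_num))]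

lemma neg_zpow_six {q : ℂ} (hq : IsPrimitiveRoot q 3) (k : ℤ) : (-q) ^ (6 * k) = 1 := by
  rw [zpow_mul]
  have : (-q) ^ (6 : ℤ) = 1 := by
    have h := hq.pow_eq_one
    rw [show (6 : ℤ) = ((6 : ℕ) : ℤ) from rfl, zpow_natCast]
    linear_combination (q ^ 3 + 1) * h
  rw [this, one_zpow]

lemma aF_periodic {q : ℂ} (hq : IsPrimitiveRoot q 3) (m k : ℤ) : aF ℂ q (m + 6 * k) = aF ℂ q m := by
  rw [aF_eq hq, aF_eq hq, zpow_add₀ (neg_ne_zero.2 (hq.ne_zero (by norm_num))),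
    neg_zpow_six hq, mul_one]

lemma dF_periodic {q : ℂ} (hq : IsPrimitiveRoot q 3) (n : ℕ) (k l : ℤ) : dF ℂ n (6 * k + l) q = dF ℂ n l q := by
  simp only [dF]
  congr 2
  ext i j : 2
  rw [show (j : ℤ) - i + (6 * k + l) = (j - i + l) + 6 * k by ring, aF_periodic hq]

lemma aF_neg {q : ℂ} (hq : IsPrimitiveRoot q 3) (m : ℤ) : aF ℂ q (-m) = -(-q) ^ (-m) * aF ℂ q m := by
  have hq0 : -q ≠ 0 := neg_ne_zero.2 (hq.ne_zero (by norm_num))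
  have h : (-q) ^ (-m) * (-q) ^ m = 1 := by rw [← zpow_add₀ hq0]; simp
  rw [aF_eq hq, aF_eq hq]
  rw [mul_div_assoc', div_left_inj' hq.one_add_ne_zero]
  linear_combination -h

lemma binVal_symm (x : ℂ) (i j : ℕ) :
    binVal x j i * ((∏ t ∈ range j, (x + 1 + t)) * i.factorial) =
      binVal x i j * ((∏ t ∈ range i, (x + 1 + t)) * j.factorial) := by
  have h (i j : ℕ) : binVal x i j * ((∏ t ∈ range i, (x + 1 + t)) * j.factorial) =
      ∏ t ∈ range (i + j), (x + 1 + t) := by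
    have h' : (j.factorial : ℂ) ≠ 0 := by exact_mod_cast j.factorial_ne_zero
    rw [Finset.prod_range_add, binVal, Finset.prod_congr rfl
      fun (t : ℕ) _ => show x + i + 1 + (t : ℂ) = x + 1 + ((i + t : ℕ) : ℂ) by push_cast; ring]
    field_simp
  rw [h, h, add_comm]

lemma dVal_neg {q : ℂ} (hq : IsPrimitiveRoot q 3) (n : ℕ) (k : ℤ) (x : ℂ) (hx : ∀ a : ℤ, x ≠ a) :
    dVal q n k x = (-(-q) ^ k) ^ n * dVal q n (-k) x := by
  have hq0 : -q ≠ 0 := neg_ne_zero.2 (hq.ne_zero (by norm_num))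
  have hP (m : ℕ) : ∏ t ∈ range m, (x + 1 + t) ≠ 0 :=
    Finset.prod_ne_zero_iff.2 fun t _ h => hx (-(1 + t)) (by push_cast; linear_combination h)
  have hF (m : ℕ) : (m.factorial : ℂ) ≠ 0 := by exact_mod_cast m.factorial_ne_zero
  let w (i : ℕ) : ℂ := (∏ t ∈ range i, (x + 1 + t)) / i.factorial * (-q) ^ (i : ℤ)
  have hw (i : ℕ) : w i ≠ 0 := mul_ne_zero (div_ne_zero (hP i) (hF i)) (zpow_ne_zero _ hq0)
  rw [dVal, ← Matrix.det_transpose]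
  have : (Matrix.of fun i j : Fin n => binVal x i j * aF ℂ q ((j : ℤ) - (i : ℤ) + k)).transpose =
      Matrix.of fun i j : Fin n => (-(-q) ^ k * w i) * ((w j)⁻¹ *
        (Matrix.of fun i j : Fin n => binVal x i j * aF ℂ q ((j : ℤ) - (i : ℤ) + -k)) i j) := by
    ext i j
    simp only [Matrix.transpose_apply, Matrix.of_apply]
    rw [show (i : ℤ) - j + k = -((j : ℤ) - i + -k) by ring, aF_neg hq,
      show -((j : ℤ) - i + -k) = i + (k - j) by ring, zpow_add₀ hq0, zpow_sub₀ hq0]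
    have hb : binVal x j i = binVal x i j *
        ((∏ t ∈ range (i : ℕ), (x + 1 + t)) / (i : ℕ).factorial *
          ((j : ℕ).factorial / ∏ t ∈ range (j : ℕ), (x + 1 + t))) := by
      have := binVal_symm x i j
      have h1 := hP j
      have h2 := hF i
      field_simp
      linear_combination this
    rw [hb]
    have h1 := hP j
    have h2 := hF i
    have h3 := hF j
    have h4 := zpow_ne_zero j hq0
    simp only [w]
    field_simp
  rw [this, det_scale, Finset.prod_mul_distrib, Finset.prod_inv_distrib, dVal]
  have h5 : ∏ i : Fin n, w i ≠ 0 := Finset.prod_ne_zero_iff.2 fun i _ => hw i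
  field_simp
  simp [mul_comm]

/-- The value `y(y+1)⋯(y+m-1)` of a Pochhammer symbol, equal to `1` for `m ≤ 0`. -/
def pochVal (y : ℂ) (m : ℤ) : ℂ := ∏ t ∈ range m.toNat, (y + t)

/-- The product `∏_{i ≥ 0} (y+3i)_{m-2i}`. -/
def upTower (m : ℤ) (y : ℂ) : ℂ := ∏ i ∈ range m.toNat, pochVal (y + 3 * i) (m - 2 * i)

/-- The product `∏_{i ≥ 0} (z-i)_{m-2i}`. -/
def downTower (m : ℤ) (z : ℂ) : ℂ := ∏ i ∈ range m.toNat, pochVal (z - i) (m - 2 * i)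

/-- The product `a(a-3)⋯(a-3(l-1))`. -/
def tripleDesc (a : ℂ) (l : ℕ) : ℂ := ∏ i ∈ range l, (a - 3 * i)

lemma pochVal_of_nonpos (y : ℂ) {m : ℤ} (hm : m ≤ 0) : pochVal y m = 1 := by
  rw [pochVal, Int.toNat_of_nonpos hm, Finset.prod_range_zero]

lemma pochVal_succ (y : ℂ) {m m' : ℤ} (hm : 0 ≤ m) (h : m' = m + 1) :
    pochVal y m' = pochVal y m * (y + m) := by
  obtain ⟨N, rfl⟩ := Int.eq_ofNat_of_zero_le hm
  subst h
  rw [pochVal, pochVal, Int.toNat_natCast, Int.toNat_natCast_add_one, Finset.prod_range_succ]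
  simp

lemma pochVal_succ' {y y' : ℂ} {m m' : ℤ} (hm : 0 ≤ m) (h : m' = m + 1) (hy : y' = y + 1) :
    pochVal y m' = y * pochVal y' m := by
  obtain ⟨N, rfl⟩ := Int.eq_ofNat_of_zero_le hm
  subst h hy
  rw [pochVal, pochVal, Int.toNat_natCast, Int.toNat_natCast_add_one, Finset.prod_range_succ',
    mul_comm]
  congr 1
  · simp
  · exact Finset.prod_congr rfl fun t _ => by push_cast; ring

lemma tripleDesc_succ (a : ℂ) (l : ℕ) :
    tripleDesc a (l + 1) = tripleDesc a l * (a - 3 * l) := by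
  rw [tripleDesc, tripleDesc, Finset.prod_range_succ]

lemma tripleDesc_succ' {a b : ℂ} (l : ℕ) (h : b = a - 3) :
    tripleDesc a (l + 1) = a * tripleDesc b l := by
  subst h
  rw [tripleDesc, tripleDesc, Finset.prod_range_succ', mul_comm]
  congr 1
  · simp
  · exact Finset.prod_congr rfl fun t _ => by push_cast; ring

lemma prod_range_eq_of_forall_eq_one (f : ℕ → ℂ) {M N : ℕ} (hM : ∀ i, M ≤ i → f i = 1)
    (hN : ∀ i, N ≤ i → f i = 1) : ∏ i ∈ range M, f i = ∏ i ∈ range N, f i := by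
  have key (A B : ℕ) (hA : ∀ i, A ≤ i → f i = 1) (h : A ≤ B) :
      ∏ i ∈ range A, f i = ∏ i ∈ range B, f i :=
    Finset.prod_subset (Finset.range_mono h) fun i _ hi =>
      hA i (by simpa using hi)
  rcases le_total M N with h | h
  · exact key M N hM h
  · exact (key N M hN h).symm

lemma prod_range_pochVal (b : ℕ → ℂ) {m : ℤ} {N : ℕ} (h : m ≤ 2 * N) :
    ∏ i ∈ range N, pochVal (b i) (m - 2 * i) = ∏ i ∈ range m.toNat, pochVal (b i) (m - 2 * i) :=
  prod_range_eq_of_forall_eq_one _ (fun i hi => pochVal_of_nonpos _ (by omega))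
    (fun i hi => pochVal_of_nonpos _ (by omega))

lemma upTower_eq_prod {m : ℤ} {N : ℕ} (y : ℂ) (h : m ≤ 2 * N) :
    upTower m y = ∏ i ∈ range N, pochVal (y + 3 * i) (m - 2 * i) :=
  (prod_range_pochVal _ h).symm

lemma downTower_eq_prod {m : ℤ} {N : ℕ} (z : ℂ) (h : m ≤ 2 * N) :
    downTower m z = ∏ i ∈ range N, pochVal (z - i) (m - 2 * i) :=
  (prod_range_pochVal _ h).symm

lemma upTower_of_nonpos (y : ℂ) {m : ℤ} (hm : m ≤ 0) : upTower m y = 1 := by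
  rw [upTower, Int.toNat_of_nonpos hm, Finset.prod_range_zero]

lemma downTower_of_nonpos (y : ℂ) {m : ℤ} (hm : m ≤ 0) : downTower m y = 1 := by
  rw [downTower, Int.toNat_of_nonpos hm, Finset.prod_range_zero]

lemma upTower_eq_mul {m m' : ℤ} {y y' : ℂ} (hm : m' = m - 2) (hy : y' = y + 3) :
    upTower m y = pochVal y m * upTower m' y' := by
  subst hm hy
  rw [upTower_eq_prod (N := m.toNat + 1) _ (by omega), upTower_eq_prod (N := m.toNat) _ (by omega),
    Finset.prod_range_succ', mul_comm]
  congr 1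
  · simp
  · exact Finset.prod_congr rfl fun t _ => by congr 1 <;> push_cast <;> ring

lemma downTower_eq_mul {m m' : ℤ} {y y' : ℂ} (hm : m' = m - 2) (hy : y' = y - 1) :
    downTower m y = pochVal y m * downTower m' y' := by
  subst hm hy
  rw [downTower_eq_prod (N := m.toNat + 1) _ (by omega),
    downTower_eq_prod (N := m.toNat) _ (by omega), Finset.prod_range_succ', mul_comm]
  congr 1
  · simp
  · exact Finset.prod_congr rfl fun t _ => by congr 1 <;> push_cast <;> ring

lemma upTower_succ {m m' : ℤ} {y a : ℂ} {l : ℕ} (hm : m' = m + 1) (ha : a = y + m)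
    (hl : m = 2 * l - 1 ∨ m = 2 * l - 2) :
    upTower m' y = upTower m y * pochVal a l := by
  subst hm ha
  rw [upTower_eq_prod (N := l) _ (by omega), upTower_eq_prod (N := l) _ (by omega), pochVal,
    Int.toNat_natCast, ← Finset.prod_mul_distrib]
  refine Finset.prod_congr rfl fun i hi => ?_
  have := Finset.mem_range.1 hi
  rw [pochVal_succ _ (m := m - 2 * i) (by omega) (by ring)]
  push_cast
  ring

lemma downTower_succ {m m' : ℤ} {y a : ℂ} {l : ℕ} (hm : m' = m + 1) (ha : a = y + m)
    (hl : m = 2 * l - 1 ∨ m = 2 * l - 2) :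
    downTower m' y = downTower m y * tripleDesc a l := by
  subst hm ha
  rw [downTower_eq_prod (N := l) _ (by omega), downTower_eq_prod (N := l) _ (by omega),
    tripleDesc, ← Finset.prod_mul_distrib]
  refine Finset.prod_congr rfl fun i hi => ?_
  have := Finset.mem_range.1 hi
  rw [pochVal_succ _ (m := m - 2 * i) (by omega) (by ring)]
  push_cast
  ring

lemma pochVal_ne_zero {y : ℂ} (hy : ∀ a : ℤ, 2 * y ≠ a) (m : ℤ) : pochVal y m ≠ 0 :=
  Finset.prod_ne_zero_iff.2 fun t _ h => hy (-(2 * t)) (by push_cast; linear_combination 2 * h)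

lemma two_mul_add_ne {y z : ℂ} (hy : ∀ a : ℤ, 2 * y ≠ a) (b : ℤ) (hz : 2 * z = 2 * y + b)
    (a : ℤ) : 2 * z ≠ a := fun h => hy (a - b) (by push_cast; linear_combination h - hz)

lemma upTower_ne_zero {y : ℂ} (hy : ∀ a : ℤ, 2 * y ≠ a) (m : ℤ) : upTower m y ≠ 0 :=
  Finset.prod_ne_zero_iff.2 fun i _ => pochVal_ne_zero
    (two_mul_add_ne hy (6 * i) (by push_cast; ring)) _

lemma downTower_ne_zero {y : ℂ} (hy : ∀ a : ℤ, 2 * y ≠ a) (m : ℤ) : downTower m y ≠ 0 :=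
  Finset.prod_ne_zero_iff.2 fun i _ => pochVal_ne_zero
    (two_mul_add_ne hy (-2 * i) (by push_cast; ring)) _

/-- The factors of `d_{2M,1}(2y)` that depend on `y`. -/
def evenOne (M : ℤ) (y : ℂ) : ℂ :=
  upTower M (y + 1) * upTower (M - 2) (y + 3) *
    (downTower (M - 1) (y + 2 * M + 1 / 2) * downTower (M - 1) (y + 2 * M - 1 / 2))

/-- The factors of `d_{2M+1,1}(2y)` that depend on `y`. -/
def oddOne (M : ℤ) (y : ℂ) : ℂ :=
  upTower M (y + 1) * upTower (M - 1) (y + 3) *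
    (downTower M (y + 2 * M + 3 / 2) * downTower (M - 1) (y + 2 * M + 1 / 2))

/-- The factors of `d_{2M,2}(2y)` that depend on `y`. -/
def evenTwo (M : ℤ) (y : ℂ) : ℂ :=
  downTower M (y + 2 * M) * downTower (M - 2) (y + 2 * M) *
    (upTower (M - 1) (y + 3 / 2) * upTower (M - 1) (y + 5 / 2))

/-- The factors of `d_{2M+1,2}(2y)` that depend on `y`. -/
def oddTwo (M : ℤ) (y : ℂ) : ℂ :=
  downTower M (y + 2 * M + 1) * downTower (M - 1) (y + 2 * M + 1) *
    (upTower M (y + 3 / 2) * upTower (M - 1) (y + 5 / 2))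

/-- The factors of `d_{2M,3}(2y)` that depend on `y`. -/
def evenThree (M : ℤ) (y : ℂ) : ℂ :=
  upTower (M - 1) (y + 2) ^ 2 *
    (downTower M (y + 2 * M + 1 / 2) * downTower (M - 2) (y + 2 * M - 1 / 2))

/-- The factors of `d_{2M+1,3}(2y)` that depend on `y`. -/
def oddThree (M : ℤ) (y : ℂ) : ℂ :=
  upTower M (y + 2) * upTower (M - 1) (y + 2) *
    (downTower M (y + 2 * M + 1 / 2) * downTower (M - 1) (y + 2 * M + 3 / 2))

/-- The factors of `d_{2M,0}(2y)` that depend on `y`. -/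
def evenZero (M : ℤ) (y : ℂ) : ℂ :=
  upTower M (y + 1 / 2) * upTower (M - 2) (y + 7 / 2) * downTower (M - 1) (y + 2 * M) ^ 2

lemma exists_two_mul {M : ℤ} (hM : 1 ≤ M) :
    (∃ j : ℕ, M = 2 * j + 2) ∨ ∃ j : ℕ, M = 2 * j + 1 := by
  rcases Int.even_or_odd' M with ⟨j, h | h⟩
  · exact Or.inl ⟨(j - 1).toNat, by omega⟩
  · exact Or.inr ⟨j.toNat, by omega⟩

lemma evenOne_mul {M : ℤ} (hM : 1 ≤ M) (y : ℂ) :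
    evenOne M y * evenOne (M - 1) (y + 1) =
      (y + M) * (oddOne (M - 1) y * oddOne (M - 1) (y + 1)) := by
  have e1 : evenOne (M - 1) (y + 1) = upTower (M - 1) (y + 2) * upTower (M - 3) (y + 4) *
      (downTower (M - 2) (y + 2 * M - 1 / 2) * downTower (M - 2) (y + 2 * M - 3 / 2)) := by
    unfold evenOne; congr 3 <;> (push_cast; ring)
  have e2 : oddOne (M - 1) y = upTower (M - 1) (y + 1) * upTower (M - 2) (y + 3) *
      (downTower (M - 1) (y + 2 * M - 1 / 2) * downTower (M - 2) (y + 2 * M - 3 / 2)) := by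
    unfold oddOne; congr 3 <;> (push_cast; ring)
  have e3 : oddOne (M - 1) (y + 1) = upTower (M - 1) (y + 2) * upTower (M - 2) (y + 4) *
      (downTower (M - 1) (y + 2 * M + 1 / 2) * downTower (M - 2) (y + 2 * M - 1 / 2)) := by
    unfold oddOne; congr 3 <;> (push_cast; ring)
  rw [e1, e2, e3, evenOne,
    upTower_eq_mul (m := M) (m' := M - 2) (y' := y + 4) rfl (by ring),
    upTower_eq_mul (m := M - 1) (m' := M - 3) (y := y + 1) (y' := y + 4) (by ring) (by ring),
    pochVal_succ (m' := M) (m := M - 1) _ (by omega) (by ring)]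
  push_cast
  ring

lemma evenTwo_mul {M : ℤ} (hM : 1 ≤ M) (y : ℂ) :
    evenTwo M y * evenTwo (M - 1) (y + 1) =
      (y + 3 * M - 1) * (oddTwo (M - 1) y * oddTwo (M - 1) (y + 1)) := by
  have e1 : evenTwo (M - 1) (y + 1) =
      downTower (M - 1) (y + 2 * M - 1) * downTower (M - 3) (y + 2 * M - 1) *
      (upTower (M - 2) (y + 5 / 2) * upTower (M - 2) (y + 7 / 2)) := by
    unfold evenTwo; congr 3 <;> (push_cast; ring)
  have e2 : oddTwo (M - 1) y =
      downTower (M - 1) (y + 2 * M - 1) * downTower (M - 2) (y + 2 * M - 1) *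
      (upTower (M - 1) (y + 3 / 2) * upTower (M - 2) (y + 5 / 2)) := by
    unfold oddTwo; congr 3 <;> (push_cast; ring)
  have e3 : oddTwo (M - 1) (y + 1) =
      downTower (M - 1) (y + 2 * M) * downTower (M - 2) (y + 2 * M) *
      (upTower (M - 1) (y + 5 / 2) * upTower (M - 2) (y + 7 / 2)) := by
    unfold oddTwo; congr 3 <;> (push_cast; ring)
  rw [e1, e2, e3, evenTwo,
    downTower_eq_mul (m := M) (m' := M - 2) (y' := y + 2 * M - 1) rfl (by ring),
    downTower_eq_mul (m := M - 1) (m' := M - 3) (y := y + 2 * M) (y' := y + 2 * M - 1) (by ring)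
      (by ring),
    pochVal_succ (m' := M) (m := M - 1) _ (by omega) (by ring)]
  push_cast
  ring

lemma oddOne_mul_oddThree (M : ℤ) (y : ℂ) :
    oddOne (M - 1) (y + 1 / 2) * oddThree (M - 1) (y + 1 / 2) =
      oddTwo (M - 1) y * oddTwo (M - 1) (y + 1) := by
  have e1 : oddOne (M - 1) (y + 1 / 2) = upTower (M - 1) (y + 3 / 2) * upTower (M - 2) (y + 7 / 2) *
      (downTower (M - 1) (y + 2 * M) * downTower (M - 2) (y + 2 * M - 1)) := by
    unfold oddOne; congr 3 <;> (push_cast; ring)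
  have e4 : oddThree (M - 1) (y + 1 / 2) =
      upTower (M - 1) (y + 5 / 2) * upTower (M - 2) (y + 5 / 2) *
      (downTower (M - 1) (y + 2 * M - 1) * downTower (M - 2) (y + 2 * M)) := by
    unfold oddThree; congr 3 <;> (push_cast; ring)
  have e2 : oddTwo (M - 1) y =
      downTower (M - 1) (y + 2 * M - 1) * downTower (M - 2) (y + 2 * M - 1) *
      (upTower (M - 1) (y + 3 / 2) * upTower (M - 2) (y + 5 / 2)) := by
    unfold oddTwo; congr 3 <;> (push_cast; ring)
  have e3 : oddTwo (M - 1) (y + 1) =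
      downTower (M - 1) (y + 2 * M) * downTower (M - 2) (y + 2 * M) *
      (upTower (M - 1) (y + 5 / 2) * upTower (M - 2) (y + 7 / 2)) := by
    unfold oddTwo; congr 3 <;> (push_cast; ring)
  rw [e1, e2, e3, e4]
  ring

lemma evenZero_mul {M : ℤ} (hM : 1 ≤ M) (y : ℂ) :
    evenZero M y * evenZero (M - 1) (y + 1) = (y + 1 / 2) * oddOne (M - 1) (y + 1 / 2) ^ 2 := by
  have e1 : oddOne (M - 1) (y + 1 / 2) = upTower (M - 1) (y + 3 / 2) * upTower (M - 2) (y + 7 / 2) *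
      (downTower (M - 1) (y + 2 * M) * downTower (M - 2) (y + 2 * M - 1)) := by
    unfold oddOne; congr 3 <;> (push_cast; ring)
  have e2 : evenZero (M - 1) (y + 1) = upTower (M - 1) (y + 3 / 2) * upTower (M - 3) (y + 9 / 2) *
      downTower (M - 2) (y + 2 * M - 1) ^ 2 := by
    unfold evenZero; congr 3 <;> (push_cast; ring)
  rw [e1, e2, evenZero,
    upTower_eq_mul (m := M) (m' := M - 2) (y := y + 1 / 2) (y' := y + 7 / 2) rfl (by ring),
    upTower_eq_mul (m := M - 1) (m' := M - 3) (y := y + 3 / 2) (y' := y + 9 / 2) (by ring)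
      (by ring),
    pochVal_succ' (m' := M) (m := M - 1) (y := y + 1 / 2) (y' := y + 3 / 2) (by omega) (by ring)
      (by ring)]
  ring

lemma upTower_mul_cross_even {M : ℤ} (hM : 1 ≤ M) (y : ℂ) :
    ∃ D : ℂ, (M % 2 = 0 → D = y + 3 * M / 2) ∧ (M % 2 = 1 → D = y + 3 * M / 2 - 1 / 2) ∧
      upTower (M - 1) (y + 2) * upTower (M - 2) (y + 3) * D =
        (y + M) * (upTower (M - 2) (y + 2) * upTower (M - 1) (y + 3)) := by
  have main (l : ℕ) (hl : M = 2 * l + 1 ∨ M = 2 * l) :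
      upTower (M - 1) (y + 2) * upTower (M - 2) (y + 3) * (y + M + l) =
        (y + M) * (upTower (M - 2) (y + 2) * upTower (M - 1) (y + 3)) := by
    rw [upTower_succ (m' := M - 1) (m := M - 2) (y := y + 2) (a := y + M) (l := l) (by ring)
        (by push_cast; ring) (by omega),
      upTower_succ (m' := M - 1) (m := M - 2) (y := y + 3) (a := y + M + 1) (l := l) (by ring)
        (by push_cast; ring) (by omega)]
    have h1 := pochVal_succ (y + M) (m := l) (by omega) rfl
    have h2 := pochVal_succ' (y := y + M) (y' := y + M + 1) (m := l) (by omega) rfl rfl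
    push_cast at h1
    linear_combination upTower (M - 2) (y + 2) * upTower (M - 2) (y + 3) * (h2 - h1)
  rcases exists_two_mul hM with ⟨j, h⟩ | ⟨j, h⟩
  · refine ⟨y + M + (j + 1 : ℕ), fun _ => ?_, fun _ => by omega, main (j + 1) (by omega)⟩
    rw [h]; push_cast; ring
  · refine ⟨y + M + (j : ℕ), fun _ => by omega, fun _ => ?_, main j (by omega)⟩
    rw [h]; push_cast; ring

lemma downTower_mul_cross_three {M : ℤ} (hM : 1 ≤ M) (z : ℂ) :
    ∃ D : ℂ, (M % 2 = 0 → D = z - M / 2 - 1) ∧ (M % 2 = 1 → D = z - M / 2 - 1 / 2) ∧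
      downTower M z * downTower (M - 3) (z - 2) * D =
        (z + M - 1) * (z + M - 2) * (downTower (M - 1) (z - 2) * downTower (M - 2) z) := by
  rcases exists_two_mul hM with ⟨j, h⟩ | ⟨j, h⟩
  · refine ⟨z + M - 4 - 3 * j, fun _ => by rw [h]; push_cast; ring, fun _ => by omega, ?_⟩
    rw [downTower_succ (m' := M) (m := M - 1) (y := z) (a := z + M - 1) (l := j + 1)
        (by ring) (by push_cast; ring) (by omega),
      downTower_succ (m' := M - 1) (m := M - 2) (y := z) (a := z + M - 2) (l := j + 1)
        (by ring) (by push_cast; ring) (by omega),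
      downTower_succ (m' := M - 1) (m := M - 2) (y := z - 2) (a := z + M - 4) (l := j + 1)
        (by ring) (by push_cast; ring) (by omega),
      downTower_succ (m' := M - 2) (m := M - 3) (y := z - 2) (a := z + M - 5) (l := j)
        (by ring) (by push_cast; ring) (by omega),
      tripleDesc_succ' (a := z + M - 1) (b := z + M - 4) j (by ring),
      tripleDesc_succ' (a := z + M - 2) (b := z + M - 5) j (by ring), tripleDesc_succ]
    ring
  · refine ⟨z + M - 2 - 3 * j, fun _ => by omega, fun _ => by rw [h]; push_cast; ring, ?_⟩
    rw [downTower_succ (m' := M) (m := M - 1) (y := z) (a := z + M - 1) (l := j + 1)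
        (by ring) (by push_cast; ring) (by omega),
      downTower_succ (m' := M - 1) (m := M - 2) (y := z) (a := z + M - 2) (l := j)
        (by ring) (by push_cast; ring) (by omega),
      downTower_succ (m' := M - 1) (m := M - 2) (y := z - 2) (a := z + M - 4) (l := j)
        (by ring) (by push_cast; ring) (by omega),
      downTower_succ (m' := M - 2) (m := M - 3) (y := z - 2) (a := z + M - 5) (l := j)
        (by ring) (by push_cast; ring) (by omega),
      tripleDesc_succ' (a := z + M - 1) (b := z + M - 4) j (by ring)]
    have h1 := tripleDesc_succ (z + M - 2) j
    rw [tripleDesc_succ' (b := z + M - 5) j (by ring)] at h1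
    linear_combination -(downTower (M - 2) z * downTower (M - 3) (z - 2) *
      tripleDesc (z + M - 4) j * (z + M - 1)) * h1

lemma downTower_mul_cross_one {M : ℤ} (hM : 1 ≤ M) (w : ℂ) :
    ∃ D : ℂ, (M % 2 = 0 → D = w - M / 2) ∧ (M % 2 = 1 → D = w - M / 2 + 1 / 2) ∧
      downTower (M - 1) w * downTower (M - 2) w * D =
        w * (downTower (M - 1) (w - 1) * downTower (M - 2) (w + 1)) := by
  rcases hM.eq_or_lt with rfl | hM'
  · refine ⟨w, by norm_num, by norm_num, ?_⟩
    simp only [downTower_of_nonpos _ (show (1 - 1 : ℤ) ≤ 0 by norm_num),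
      downTower_of_nonpos _ (show (1 - 2 : ℤ) ≤ 0 by norm_num)]
    ring
  have red (D : ℂ) (h : downTower (M - 3) (w - 1) * downTower (M - 2) w * D =
      downTower (M - 1) (w - 1) * downTower (M - 4) w) :
      downTower (M - 1) w * downTower (M - 2) w * D =
        w * (downTower (M - 1) (w - 1) * downTower (M - 2) (w + 1)) := by
    rw [downTower_eq_mul (m := M - 1) (m' := M - 3) (y := w) (y' := w - 1) (by ring) (by ring),
      downTower_eq_mul (m := M - 2) (m' := M - 4) (y := w + 1) (y' := w) (by ring) (by ring),
      pochVal_succ' (y := w) (y' := w + 1) (m' := M - 1) (m := M - 2) (by omega) (by ring)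
        (by ring)]
    linear_combination w * pochVal (w + 1) (M - 2) * h
  rcases exists_two_mul hM with ⟨j, h⟩ | ⟨_ | j, h⟩
  · refine ⟨w + M - 3 - 3 * j, fun _ => by rw [h]; push_cast; ring, fun _ => by omega, red _ ?_⟩
    rw [downTower_succ (m' := M - 2) (m := M - 3) (y := w) (a := w + M - 3) (l := j)
        (by ring) (by push_cast; ring) (by omega),
      downTower_succ (m' := M - 3) (m := M - 4) (y := w) (a := w + M - 4) (l := j)
        (by ring) (by push_cast; ring) (by omega),
      downTower_succ (m' := M - 1) (m := M - 2) (y := w - 1) (a := w + M - 3) (l := j + 1)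
        (by ring) (by push_cast; ring) (by omega),
      downTower_succ (m' := M - 2) (m := M - 3) (y := w - 1) (a := w + M - 4) (l := j)
        (by ring) (by push_cast; ring) (by omega), tripleDesc_succ]
    ring
  · omega
  · refine ⟨w + M - 4 - 3 * j, fun _ => by omega, fun _ => by rw [h]; push_cast; ring, red _ ?_⟩
    rw [downTower_succ (m' := M - 2) (m := M - 3) (y := w) (a := w + M - 3) (l := j + 1)
        (by ring) (by push_cast; ring) (by omega),
      downTower_succ (m' := M - 3) (m := M - 4) (y := w) (a := w + M - 4) (l := j)
        (by ring) (by push_cast; ring) (by omega),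
      downTower_succ (m' := M - 1) (m := M - 2) (y := w - 1) (a := w + M - 3) (l := j + 1)
        (by ring) (by push_cast; ring) (by omega),
      downTower_succ (m' := M - 2) (m := M - 3) (y := w - 1) (a := w + M - 4) (l := j + 1)
        (by ring) (by push_cast; ring) (by omega), tripleDesc_succ (w + M - 4)]
    ring

lemma oddThree_pred (M : ℤ) (y : ℂ) : oddThree (M - 1) y =
    upTower (M - 1) (y + 2) * upTower (M - 2) (y + 2) *
      (downTower (M - 1) (y + 2 * M - 3 / 2) * downTower (M - 2) (y + 2 * M - 1 / 2)) := by
  unfold oddThree; congr 3 <;> (push_cast; ring)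

lemma oddThree_pred_add_one (M : ℤ) (y : ℂ) : oddThree (M - 1) (y + 1) =
    upTower (M - 1) (y + 3) * upTower (M - 2) (y + 3) *
      (downTower (M - 1) (y + 2 * M - 1 / 2) * downTower (M - 2) (y + 2 * M + 1 / 2)) := by
  unfold oddThree; congr 3 <;> (push_cast; ring)

lemma evenThree_mul {M : ℤ} (hM : 1 ≤ M) (y : ℂ) :
    evenThree M y * evenThree (M - 1) (y + 1) * ((y + 3 * M / 2) * (y + 3 * M / 2 - 1 / 2)) =
      (y + M) * (y + 3 * M - 1 / 2) * (y + 3 * M - 3 / 2) *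
        (oddThree (M - 1) y * oddThree (M - 1) (y + 1)) := by
  have e1 : evenThree (M - 1) (y + 1) = upTower (M - 2) (y + 3) ^ 2 *
      (downTower (M - 1) (y + 2 * M - 1 / 2) * downTower (M - 3) (y + 2 * M - 3 / 2)) := by
    unfold evenThree; congr 3 <;> (push_cast; ring)
  obtain ⟨D, hD0, hD1, hD⟩ := upTower_mul_cross_even hM y
  obtain ⟨E, hE0, hE1, hE⟩ := downTower_mul_cross_three hM (y + 2 * M + 1 / 2)
  have hz : y + 2 * M + 1 / 2 - 2 = y + 2 * M - 3 / 2 := by ring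
  rw [hz] at hE
  have hDE : (y + 3 * M / 2) * (y + 3 * M / 2 - 1 / 2) = D * E := by
    rcases Int.emod_two_eq_zero_or_one M with h | h
    · rw [hD0 h, hE0 h]; ring
    · rw [hD1 h, hE1 h]; ring
  rw [e1, oddThree_pred, oddThree_pred_add_one, evenThree, hDE]
  linear_combination upTower (M - 1) (y + 2) * upTower (M - 2) (y + 3) *
    downTower (M - 1) (y + 2 * M - 1 / 2) * downTower (M - 2) (y + 2 * M - 1 / 2) *
    (E * downTower M (y + 2 * M + 1 / 2) * downTower (M - 3) (y + 2 * M - 3 / 2) * hD +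
      (y + M) * (upTower (M - 2) (y + 2) * upTower (M - 1) (y + 3)) * hE)

lemma oddTwo_sq {M : ℤ} (hM : 1 ≤ M) (y : ℂ) :
    oddTwo (M - 1) (y + 1 / 2) ^ 2 * ((y + 3 * M / 2) * (y + 3 * M / 2 - 1 / 2)) =
      (y + 2 * M - 1 / 2) * (y + M) * (oddThree (M - 1) y * oddThree (M - 1) (y + 1)) := by
  have e1 : oddTwo (M - 1) (y + 1 / 2) =
      downTower (M - 1) (y + 2 * M - 1 / 2) * downTower (M - 2) (y + 2 * M - 1 / 2) *
      (upTower (M - 1) (y + 2) * upTower (M - 2) (y + 3)) := by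
    unfold oddTwo; congr 3 <;> (push_cast; ring)
  obtain ⟨D, hD0, hD1, hD⟩ := upTower_mul_cross_even hM y
  obtain ⟨E, hE0, hE1, hE⟩ := downTower_mul_cross_one hM (y + 2 * M - 1 / 2)
  have hz : y + 2 * M - 1 / 2 - 1 = y + 2 * M - 3 / 2 := by ring
  have hz' : y + 2 * M - 1 / 2 + 1 = y + 2 * M + 1 / 2 := by ring
  rw [hz, hz'] at hE
  have hDE : (y + 3 * M / 2) * (y + 3 * M / 2 - 1 / 2) = D * E := by
    rcases Int.emod_two_eq_zero_or_one M with h | h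
    · rw [hD0 h, hE0 h]; ring
    · rw [hD1 h, hE1 h]; ring
  rw [e1, oddThree_pred, oddThree_pred_add_one, hDE]
  linear_combination upTower (M - 1) (y + 2) * upTower (M - 2) (y + 3) *
    downTower (M - 1) (y + 2 * M - 1 / 2) * downTower (M - 2) (y + 2 * M - 1 / 2) *
    (E * downTower (M - 1) (y + 2 * M - 1 / 2) * downTower (M - 2) (y + 2 * M - 1 / 2) * hD +
      (y + M) * (upTower (M - 2) (y + 2) * upTower (M - 1) (y + 3)) * hE)

lemma tower_mul_cross_one {M : ℤ} (hM : 1 ≤ M) (y : ℂ) :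
    upTower (M - 1) (y + 2) * upTower (M - 1) (y + 3) *
        (downTower (M - 2) (y + 2 * M - 1 / 2) * downTower (M - 2) (y + 2 * M + 1 / 2)) *
        (y + (3 * M + 1) / 2) =
      upTower (M - 2) (y + 3) * upTower M (y + 2) *
        (downTower (M - 1) (y + 2 * M - 1 / 2) * downTower (M - 3) (y + 2 * M + 1 / 2)) := by
  rcases exists_two_mul hM with ⟨j, h⟩ | ⟨j, h⟩
  · rw [upTower_succ (m' := M) (m := M - 1) (y := y + 2) (a := y + M + 1) (l := j + 1)
        (by ring) (by push_cast; ring) (by omega),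
      upTower_succ (m' := M - 1) (m := M - 2) (y := y + 3) (a := y + M + 1) (l := j + 1)
        (by ring) (by push_cast; ring) (by omega),
      downTower_succ (m' := M - 1) (m := M - 2) (y := y + 2 * M - 1 / 2)
        (a := y + 3 * M - 5 / 2) (l := j + 1) (by ring) (by push_cast; ring) (by omega),
      downTower_succ (m' := M - 2) (m := M - 3) (y := y + 2 * M + 1 / 2)
        (a := y + 3 * M - 5 / 2) (l := j) (by ring) (by push_cast; ring) (by omega),
      tripleDesc_succ, show (y + (3 * M + 1) / 2 : ℂ) = y + 3 * M - 5 / 2 - 3 * j by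
        rw [h]; push_cast; ring]
    ring
  · rw [upTower_succ (m' := M) (m := M - 1) (y := y + 2) (a := y + M + 1) (l := j + 1)
        (by ring) (by push_cast; ring) (by omega),
      upTower_succ (m' := M - 1) (m := M - 2) (y := y + 3) (a := y + M + 1) (l := j)
        (by ring) (by push_cast; ring) (by omega),
      downTower_succ (m' := M - 1) (m := M - 2) (y := y + 2 * M - 1 / 2)
        (a := y + 3 * M - 5 / 2) (l := j) (by ring) (by push_cast; ring) (by omega),
      downTower_succ (m' := M - 2) (m := M - 3) (y := y + 2 * M + 1 / 2)
        (a := y + 3 * M - 5 / 2) (l := j) (by ring) (by push_cast; ring) (by omega),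
      pochVal_succ (y + M + 1) (m := (j : ℤ)) (m' := (j + 1 : ℕ)) (by omega) (by push_cast; ring),
      show (y + (3 * M + 1) / 2 : ℂ) = y + M + 1 + (j : ℤ) by rw [h]; push_cast; ring]
    ring

lemma tower_mul_cross_two {M : ℤ} (hM : 1 ≤ M) (y : ℂ) :
    upTower M (y + 3 / 2) * upTower (M - 2) (y + 7 / 2) *
        (downTower (M - 1) (y + 2 * M + 1) * downTower (M - 1) (y + 2 * M)) *
        (y + (3 * M + 1) / 2) =
      (y + M + 1 / 2) * (upTower (M - 1) (y + 3 / 2) * upTower (M - 1) (y + 7 / 2) *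
        (downTower M (y + 2 * M) * downTower (M - 2) (y + 2 * M + 1))) := by
  rw [upTower_eq_mul (m := M) (m' := M - 2) (y := y + 3 / 2) (y' := y + 9 / 2) (by ring)
      (by ring),
    upTower_eq_mul (m := M - 1) (m' := M - 3) (y := y + 3 / 2) (y' := y + 9 / 2) (by ring)
      (by ring),
    pochVal_succ (m' := M) (m := M - 1) _ (by omega) (by ring)]
  rcases exists_two_mul hM with ⟨j, h⟩ | ⟨j, h⟩
  · rw [upTower_succ (m' := M - 2) (m := M - 3) (y := y + 9 / 2) (a := y + M + 3 / 2) (l := j)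
        (by ring) (by push_cast; ring) (by omega),
      upTower_succ (m' := M - 1) (m := M - 2) (y := y + 7 / 2) (a := y + M + 3 / 2) (l := j + 1)
        (by ring) (by push_cast; ring) (by omega),
      downTower_succ (m' := M) (m := M - 1) (y := y + 2 * M)
        (a := y + 3 * M - 1) (l := j + 1) (by ring) (by push_cast; ring) (by omega),
      downTower_succ (m' := M - 1) (m := M - 2) (y := y + 2 * M + 1)
        (a := y + 3 * M - 1) (l := j + 1) (by ring) (by push_cast; ring) (by omega),
      pochVal_succ (y + M + 3 / 2) (m := (j : ℤ)) (m' := (j + 1 : ℕ)) (by omega)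
        (by push_cast; ring),
      show (y + (3 * M + 1) / 2 : ℂ) = y + M + 3 / 2 + (j : ℤ) by rw [h]; push_cast; ring]
    push_cast
    ring
  · rw [upTower_succ (m' := M - 2) (m := M - 3) (y := y + 9 / 2) (a := y + M + 3 / 2) (l := j)
        (by ring) (by push_cast; ring) (by omega),
      upTower_succ (m' := M - 1) (m := M - 2) (y := y + 7 / 2) (a := y + M + 3 / 2) (l := j)
        (by ring) (by push_cast; ring) (by omega),
      downTower_succ (m' := M) (m := M - 1) (y := y + 2 * M)
        (a := y + 3 * M - 1) (l := j + 1) (by ring) (by push_cast; ring) (by omega),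
      downTower_succ (m' := M - 1) (m := M - 2) (y := y + 2 * M + 1)
        (a := y + 3 * M - 1) (l := j) (by ring) (by push_cast; ring) (by omega),
      tripleDesc_succ, show (y + (3 * M + 1) / 2 : ℂ) = y + 3 * M - 1 - 3 * j by
        rw [h]; push_cast; ring]
    push_cast
    ring

lemma downTower_shift_top {M : ℤ} (hM : 1 ≤ M) (z : ℂ) :
    ∃ c : ℂ, downTower M (z + 1) = c * (z + M) * downTower (M - 2) z ∧
      downTower (M - 1) (z + 1) = c * downTower (M - 3) z ∧
      downTower M z = z * c * downTower (M - 2) (z - 1) := by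
  refine ⟨pochVal (z + 1) (M - 1), ?_, ?_, ?_⟩
  · rw [downTower_eq_mul (m := M) (m' := M - 2) (y := z + 1) (y' := z) (by ring) (by ring),
      pochVal_succ (m' := M) (m := M - 1) _ (by omega) (by ring)]
    push_cast
    ring
  · exact downTower_eq_mul (by ring) (by ring)
  · rw [downTower_eq_mul (m := M) (m' := M - 2) (y := z) (y' := z - 1) (by ring) (by ring),
      pochVal_succ' (y := z) (y' := z + 1) (m' := M) (m := M - 1) (by omega) (by ring) rfl]

lemma evenTwo_half (M : ℤ) (y : ℂ) : evenTwo M (y + 1 / 2) =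
    downTower M (y + 2 * M + 1 / 2) * downTower (M - 2) (y + 2 * M + 1 / 2) *
      (upTower (M - 1) (y + 2) * upTower (M - 1) (y + 3)) := by
  unfold evenTwo; congr 3 <;> ring

lemma evenOne_add_one (M : ℤ) (y : ℂ) : evenOne M (y + 1) =
    upTower M (y + 2) * upTower (M - 2) (y + 4) *
      (downTower (M - 1) (y + 2 * M + 1 / 2 + 1) * downTower (M - 1) (y + 2 * M + 1 / 2)) := by
  unfold evenOne; congr 3 <;> ring

lemma evenTwo_add_one (M : ℤ) (y : ℂ) : evenTwo M (y + 1) =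
    downTower M (y + 2 * M + 1) * downTower (M - 2) (y + 2 * M + 1) *
      (upTower (M - 1) (y + 5 / 2) * upTower (M - 1) (y + 7 / 2)) := by
  unfold evenTwo; congr 3 <;> ring

lemma evenThree_add_one (M : ℤ) (y : ℂ) : evenThree M (y + 1) = upTower (M - 1) (y + 3) ^ 2 *
    (downTower M (y + 2 * M + 1 / 2 + 1) * downTower (M - 2) (y + 2 * M + 1 / 2)) := by
  unfold evenThree; congr 3 <;> ring

lemma oddOne_mul {M : ℤ} (hM : 1 ≤ M) (y : ℂ) :
    oddOne M y * oddOne (M - 1) (y + 1) * (y + (3 * M + 1) / 2) =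
      (y + 3 * M + 1 / 2) * (evenOne M y * evenOne M (y + 1)) := by
  have e1 : oddOne M y = upTower M (y + 1) * upTower (M - 1) (y + 3) *
      (downTower M (y + 2 * M + 1 / 2 + 1) * downTower (M - 1) (y + 2 * M + 1 / 2)) := by
    unfold oddOne; congr 3; ring
  have e2 : oddOne (M - 1) (y + 1) = upTower (M - 1) (y + 2) * upTower (M - 2) (y + 4) *
      (downTower (M - 1) (y + 2 * M + 1 / 2) * downTower (M - 2) (y + 2 * M - 1 / 2)) := by
    unfold oddOne; congr 3 <;> (push_cast; ring)
  obtain ⟨c, h1, h2, -⟩ := downTower_shift_top hM (y + 2 * M + 1 / 2)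
  rw [e1, e2, evenOne_add_one, evenOne, h1, h2]
  linear_combination upTower M (y + 1) * upTower (M - 2) (y + 4) *
    downTower (M - 1) (y + 2 * M + 1 / 2) ^ 2 * c * (y + 3 * M + 1 / 2) * tower_mul_cross_one hM y

lemma evenZero_mul_evenTwo {M : ℤ} (hM : 1 ≤ M) (y : ℂ) :
    evenZero M (y + 1 / 2) * evenTwo M (y + 1 / 2) * (y + (3 * M + 1) / 2) =
      (y + 2 * M + 1 / 2) * (evenOne M y * evenOne M (y + 1)) := by
  have e1 : evenZero M (y + 1 / 2) = upTower M (y + 1) * upTower (M - 2) (y + 4) *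
      downTower (M - 1) (y + 2 * M + 1 / 2) ^ 2 := by
    unfold evenZero; congr 3 <;> ring
  have hz : y + 2 * M + 1 / 2 - 1 = y + 2 * M - 1 / 2 := by ring
  obtain ⟨c, -, h2, h3⟩ := downTower_shift_top hM (y + 2 * M + 1 / 2)
  rw [e1, evenTwo_half, evenOne_add_one, evenOne, h2, h3, hz]
  linear_combination upTower M (y + 1) * upTower (M - 2) (y + 4) *
    downTower (M - 1) (y + 2 * M + 1 / 2) ^ 2 * c * (y + 2 * M + 1 / 2) * tower_mul_cross_one hM y

lemma oddTwo_mul {M : ℤ} (hM : 1 ≤ M) (y : ℂ) :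
    oddTwo M y * oddTwo (M - 1) (y + 1) * (y + (3 * M + 1) / 2) =
      (y + M + 1 / 2) * (evenTwo M y * evenTwo M (y + 1)) := by
  have e2 : oddTwo (M - 1) (y + 1) =
      downTower (M - 1) (y + 2 * M) * downTower (M - 2) (y + 2 * M) *
      (upTower (M - 1) (y + 5 / 2) * upTower (M - 2) (y + 7 / 2)) := by
    unfold oddTwo; congr 3 <;> (push_cast; ring)
  rw [e2, evenTwo_add_one, oddTwo, evenTwo]
  linear_combination downTower M (y + 2 * M + 1) * downTower (M - 2) (y + 2 * M) *
    upTower (M - 1) (y + 5 / 2) ^ 2 * tower_mul_cross_two hM y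

lemma evenOne_mul_evenThree {M : ℤ} (hM : 1 ≤ M) (y : ℂ) :
    evenOne M (y + 1 / 2) * evenThree M (y + 1 / 2) * (y + (3 * M + 1) / 2) =
      (y + M + 1 / 2) * (evenTwo M y * evenTwo M (y + 1)) := by
  have e1 : evenOne M (y + 1 / 2) = upTower M (y + 3 / 2) * upTower (M - 2) (y + 7 / 2) *
      (downTower (M - 1) (y + 2 * M + 1) * downTower (M - 1) (y + 2 * M)) := by
    unfold evenOne; congr 3 <;> ring
  have e2 : evenThree M (y + 1 / 2) = upTower (M - 1) (y + 5 / 2) ^ 2 *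
      (downTower M (y + 2 * M + 1) * downTower (M - 2) (y + 2 * M)) := by
    unfold evenThree; congr 3 <;> ring
  rw [e1, e2, evenTwo_add_one, evenTwo]
  linear_combination downTower M (y + 2 * M + 1) * downTower (M - 2) (y + 2 * M) *
    upTower (M - 1) (y + 5 / 2) ^ 2 * tower_mul_cross_two hM y

lemma oddThree_mul {M : ℤ} (hM : 1 ≤ M) (y : ℂ) :
    oddThree M y * oddThree (M - 1) (y + 1) * (y + 3 * M + 1 / 2) =
      (y + (3 * M + 1) / 2) * (evenThree M y * evenThree M (y + 1)) := by
  have e1 : oddThree M y = upTower M (y + 2) * upTower (M - 1) (y + 2) *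
      (downTower M (y + 2 * M + 1 / 2) * downTower (M - 1) (y + 2 * M + 1 / 2 + 1)) := by
    unfold oddThree; congr 3; ring
  obtain ⟨c, h1, h2, -⟩ := downTower_shift_top hM (y + 2 * M + 1 / 2)
  rw [e1, oddThree_pred_add_one, evenThree_add_one, evenThree, h1, h2]
  linear_combination -(upTower (M - 1) (y + 2) * upTower (M - 1) (y + 3) *
    downTower M (y + 2 * M + 1 / 2) * downTower (M - 2) (y + 2 * M + 1 / 2) * c *
      (y + 3 * M + 1 / 2)) * tower_mul_cross_one hM y

lemma evenTwo_sq {M : ℤ} (hM : 1 ≤ M) (y : ℂ) :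
    evenTwo M (y + 1 / 2) ^ 2 * (y + 3 * M + 1 / 2) =
      (y + 2 * M + 1 / 2) * (evenThree M y * evenThree M (y + 1)) := by
  obtain ⟨c, h1, -, h3⟩ := downTower_shift_top hM (y + 2 * M + 1 / 2)
  have hz : y + 2 * M + 1 / 2 - 1 = y + 2 * M - 1 / 2 := by ring
  rw [evenTwo_half, evenThree_add_one, evenThree, h1, h3, hz]
  ring

lemma prodFact1_eq (n c b : ℕ) (hc : (n + 1) / 2 = c) (hb : n / 2 = b) : prodFact1 n =
    (∏ i ∈ range c, (i.factorial : ℂ)) / ∏ i ∈ range c, ((b + i).factorial : ℂ) := by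
  rw [prodFact1, hc, Finset.prod_div_distrib,
    ← Finset.prod_range_reflect (fun i => ((b + i).factorial : ℂ))]
  congr 1
  refine Finset.prod_congr rfl fun i hi => ?_
  have := Finset.mem_range.1 hi
  congr 2
  omega

lemma natCast_factorial_ne_zero (n : ℕ) : (n.factorial : ℂ) ≠ 0 := by
  exact_mod_cast n.factorial_ne_zero

lemma prodFact1_odd (m : ℕ) : prodFact1 (2 * m + 1) =
    prodFact1 (2 * m) * (m.factorial / (2 * m).factorial) := by
  rw [prodFact1_eq (2 * m + 1) (m + 1) m (by omega) (by omega),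
    prodFact1_eq (2 * m) m m (by omega) (by omega), Finset.prod_range_succ, Finset.prod_range_succ,
    mul_div_mul_comm, two_mul]

lemma prodFact1_even (m : ℕ) : prodFact1 (2 * m + 2) =
    prodFact1 (2 * m + 1) * (m.factorial / (2 * m + 1).factorial) := by
  rw [prodFact1_eq (2 * m + 2) (m + 1) (m + 1) (by omega) (by omega),
    prodFact1_eq (2 * m + 1) (m + 1) m (by omega) (by omega), ← mul_div_mul_comm,
    div_eq_div_iff (Finset.prod_ne_zero_iff.2 fun _ _ => natCast_factorial_ne_zero _)
      (mul_ne_zero (Finset.prod_ne_zero_iff.2 fun _ _ => natCast_factorial_ne_zero _)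
        (natCast_factorial_ne_zero _)), mul_assoc]
  congr 1
  have h := Finset.prod_range_succ (fun i => ((m + i).factorial : ℂ)) (m + 1)
  rw [Finset.prod_range_succ', show m + (m + 1) = 2 * m + 1 by ring] at h
  rw [← h, mul_comm, add_zero]
  simp only [add_assoc, add_comm 1]

lemma prodFact1_ne_zero (n : ℕ) : prodFact1 n ≠ 0 :=
  Finset.prod_ne_zero_iff.2 fun _ _ =>
    div_ne_zero (natCast_factorial_ne_zero _) (natCast_factorial_ne_zero _)

lemma prodFact1_mul_even (m : ℕ) :
    (2 * m + 1) * (prodFact1 (2 * m + 2) * prodFact1 (2 * m)) = prodFact1 (2 * m + 1) ^ 2 := by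
  have h1 := natCast_factorial_ne_zero (2 * m)
  have h2 : (2 * m + 1 : ℂ) ≠ 0 := by exact_mod_cast (2 * m).succ_ne_zero
  rw [prodFact1_even, prodFact1_odd, Nat.factorial_succ]
  push_cast
  field_simp

lemma prodFact1_mul_odd (m : ℕ) :
    2 * (prodFact1 (2 * m + 3) * prodFact1 (2 * m + 1)) = prodFact1 (2 * m + 2) ^ 2 := by
  have h1 := natCast_factorial_ne_zero (2 * m + 1)
  have h3 := natCast_factorial_ne_zero m
  have h2 : (m + 1 : ℂ) ≠ 0 := by exact_mod_cast m.succ_ne_zero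
  rw [show 2 * m + 3 = 2 * (m + 1) + 1 by ring, prodFact1_odd, show 2 * (m + 1) = 2 * m + 2 by ring,
    prodFact1_even, Nat.factorial_succ (2 * m + 1), Nat.factorial_succ m]
  push_cast
  rw [show (2 * m + 1 + 1 : ℂ) = 2 * (m + 1) by ring]
  field_simp

lemma dVal_periodic {q : ℂ} (hq : IsPrimitiveRoot q 3) (n : ℕ) (k l : ℤ) (x : ℂ) :
    dVal q n (6 * k + l) x = dVal q n l x := by
  rw [← eval_dF, ← eval_dF, dF_periodic hq]

lemma dVal_four {q : ℂ} (hq : IsPrimitiveRoot q 3) (n : ℕ) (x : ℂ) (hx : ∀ a : ℤ, x ≠ a) :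
    dVal q n 4 x = (-q) ^ n * dVal q n 2 x := by
  have h : -(-q) ^ (4 : ℤ) = -q := by
    rw [show (4 : ℤ) = (4 : ℕ) from rfl, zpow_natCast]
    linear_combination -q * hq.pow_eq_one
  rw [dVal_neg hq n 4 x hx, h, ← dVal_periodic hq n 1 (-4)]
  norm_num

lemma dVal_five {q : ℂ} (hq : IsPrimitiveRoot q 3) (n : ℕ) (x : ℂ) (hx : ∀ a : ℤ, x ≠ a) :
    dVal q n 5 x = (q ^ 2) ^ n * dVal q n 1 x := by
  have h : -(-q) ^ (5 : ℤ) = q ^ 2 := by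
    rw [show (5 : ℤ) = (5 : ℕ) from rfl, zpow_natCast]
    linear_combination q ^ 2 * hq.pow_eq_one
  rw [dVal_neg hq n 5 x hx, h, ← dVal_periodic hq n 1 (-5)]
  norm_num

lemma dVal_zero_odd {q : ℂ} (hq : IsPrimitiveRoot q 3) (m : ℕ) (x : ℂ) (hx : ∀ a : ℤ, x ≠ a) :
    dVal q (2 * m + 1) 0 x = 0 := by
  have h := dVal_neg hq (2 * m + 1) 0 x hx
  rw [zpow_zero, neg_zero, pow_succ, pow_mul] at h
  norm_num at h
  exact self_eq_neg.1 h

/-- The values of `d_{2m,k}(2y)` for `k = 0, 1, 2, 3` and generic `y`. -/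
def EvenValues (q : ℂ) (m : ℕ) : Prop :=
  ∀ y : ℂ, (∀ a : ℤ, 2 * y ≠ a) →
    dVal q (2 * m) 0 (2 * y) =
      2 ^ (m * m) * prodFact1 (2 * m) * ((-q) ^ m * q ^ m * evenZero m y) ∧
    dVal q (2 * m) 1 (2 * y) = 2 ^ (m * m) * prodFact1 (2 * m) * evenOne m y ∧
    dVal q (2 * m) 2 (2 * y) = 2 ^ (m * m) * prodFact1 (2 * m) * ((-q) ^ m * evenTwo m y) ∧
    dVal q (2 * m) 3 (2 * y) =
      2 ^ (m * m) * prodFact1 (2 * m) * (((-q) ^ m) ^ 2 * evenThree m y)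

/-- The values of `d_{2m+1,k}(2y)` for `k = 1, 2, 3` and generic `y`. -/
def OddValues (q : ℂ) (m : ℕ) : Prop :=
  ∀ y : ℂ, (∀ a : ℤ, 2 * y ≠ a) →
    dVal q (2 * m + 1) 1 (2 * y) =
      2 ^ (m * m) * 2 ^ m * prodFact1 (2 * m + 1) * oddOne m y ∧
    dVal q (2 * m + 1) 2 (2 * y) =
      2 ^ (m * m) * 2 ^ m * prodFact1 (2 * m + 1) * ((-q) ^ m * (1 - q) * oddTwo m y) ∧
    dVal q (2 * m + 1) 3 (2 * y) =
      2 ^ (m * m) * 2 ^ m * prodFact1 (2 * m + 1) * (-q * ((-q) ^ m) ^ 2 * 2 * oddThree m y)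

lemma evenZero_ne_zero {y : ℂ} (hy : ∀ a : ℤ, 2 * y ≠ a) (M : ℤ) : evenZero M y ≠ 0 :=
  mul_ne_zero (mul_ne_zero (upTower_ne_zero (two_mul_add_ne hy 1 (by push_cast; ring)) _)
    (upTower_ne_zero (two_mul_add_ne hy 7 (by push_cast; ring)) _))
    (pow_ne_zero _ (downTower_ne_zero (two_mul_add_ne hy (4 * M) (by push_cast; ring)) _))

lemma evenOne_ne_zero {y : ℂ} (hy : ∀ a : ℤ, 2 * y ≠ a) (M : ℤ) : evenOne M y ≠ 0 :=
  mul_ne_zero (mul_ne_zero (upTower_ne_zero (two_mul_add_ne hy 2 (by push_cast; ring)) _)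
    (upTower_ne_zero (two_mul_add_ne hy 6 (by push_cast; ring)) _))
    (mul_ne_zero (downTower_ne_zero (two_mul_add_ne hy (4 * M + 1) (by push_cast; ring)) _)
    (downTower_ne_zero (two_mul_add_ne hy (4 * M - 1) (by push_cast; ring)) _))

lemma evenTwo_ne_zero {y : ℂ} (hy : ∀ a : ℤ, 2 * y ≠ a) (M : ℤ) : evenTwo M y ≠ 0 :=
  mul_ne_zero (mul_ne_zero
    (downTower_ne_zero (two_mul_add_ne hy (4 * M) (by push_cast; ring)) _)
    (downTower_ne_zero (two_mul_add_ne hy (4 * M) (by push_cast; ring)) _))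
    (mul_ne_zero (upTower_ne_zero (two_mul_add_ne hy 3 (by push_cast; ring)) _)
    (upTower_ne_zero (two_mul_add_ne hy 5 (by push_cast; ring)) _))

lemma evenThree_ne_zero {y : ℂ} (hy : ∀ a : ℤ, 2 * y ≠ a) (M : ℤ) : evenThree M y ≠ 0 :=
  mul_ne_zero (pow_ne_zero _ (upTower_ne_zero (two_mul_add_ne hy 4 (by push_cast; ring)) _))
    (mul_ne_zero (downTower_ne_zero (two_mul_add_ne hy (4 * M + 1) (by push_cast; ring)) _)
    (downTower_ne_zero (two_mul_add_ne hy (4 * M - 1) (by push_cast; ring)) _))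

lemma oddOne_ne_zero {y : ℂ} (hy : ∀ a : ℤ, 2 * y ≠ a) (M : ℤ) : oddOne M y ≠ 0 :=
  mul_ne_zero (mul_ne_zero (upTower_ne_zero (two_mul_add_ne hy 2 (by push_cast; ring)) _)
    (upTower_ne_zero (two_mul_add_ne hy 6 (by push_cast; ring)) _))
    (mul_ne_zero (downTower_ne_zero (two_mul_add_ne hy (4 * M + 3) (by push_cast; ring)) _)
    (downTower_ne_zero (two_mul_add_ne hy (4 * M + 1) (by push_cast; ring)) _))

lemma oddTwo_ne_zero {y : ℂ} (hy : ∀ a : ℤ, 2 * y ≠ a) (M : ℤ) : oddTwo M y ≠ 0 :=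
  mul_ne_zero (mul_ne_zero
    (downTower_ne_zero (two_mul_add_ne hy (4 * M + 2) (by push_cast; ring)) _)
    (downTower_ne_zero (two_mul_add_ne hy (4 * M + 2) (by push_cast; ring)) _))
    (mul_ne_zero (upTower_ne_zero (two_mul_add_ne hy 3 (by push_cast; ring)) _)
    (upTower_ne_zero (two_mul_add_ne hy 5 (by push_cast; ring)) _))

lemma oddThree_ne_zero {y : ℂ} (hy : ∀ a : ℤ, 2 * y ≠ a) (M : ℤ) : oddThree M y ≠ 0 :=
  mul_ne_zero (mul_ne_zero (upTower_ne_zero (two_mul_add_ne hy 4 (by push_cast; ring)) _)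
    (upTower_ne_zero (two_mul_add_ne hy 4 (by push_cast; ring)) _))
    (mul_ne_zero (downTower_ne_zero (two_mul_add_ne hy (4 * M + 1) (by push_cast; ring)) _)
    (downTower_ne_zero (two_mul_add_ne hy (4 * M + 3) (by push_cast; ring)) _))

lemma dVal_eq_of_recurrence {q : ℂ} {n : ℕ} {k : ℤ} {y T D : ℂ} (hy : ∀ a : ℤ, 2 * y ≠ a)
    (h0 : dVal q n k (2 * (y + 1)) ≠ 0) (hD : D ≠ 0)
    (h : (n + 1) * T * dVal q n k (2 * (y + 1)) * D =
      ((2 * y + n + 2) * dVal q (n + 1) k (2 * y) * dVal q (n + 1) k (2 * (y + 1)) -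
      (2 * y + 1) * dVal q (n + 1) (k - 1) (2 * (y + 1 / 2)) *
        dVal q (n + 1) (k + 1) (2 * (y + 1 / 2))) * D) :
    dVal q (n + 2) k (2 * y) = T := by
  have h2 : 2 * (y + 1) = 2 * y + 2 := by ring
  have h1 : 2 * (y + 1 / 2) = 2 * y + 1 := by ring
  rw [h2] at h0
  rw [h1, h2, ← dVal_recurrence q n k (2 * y) hy h0] at h
  have hn : (n + 1 : ℂ) ≠ 0 := by exact_mod_cast n.succ_ne_zero
  have := mul_right_cancel₀ h0 (mul_right_cancel₀ hD h)
  exact (mul_left_cancel₀ hn this).symm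

lemma two_pow_succ_mul_self (m : ℕ) : (2 : ℂ) ^ ((m + 1) * (m + 1)) = 2 * 2 ^ (m * m) * (2 ^ m) ^ 2 := by
  ring

lemma EvenValues.succ {q : ℂ} (hq : IsPrimitiveRoot q 3) {m : ℕ} (he : EvenValues q m)
    (ho : OddValues q m) : EvenValues q (m + 1) := by
  intro y hy
  have hy1 := two_mul_add_ne hy 2 (z := y + 1) (by push_cast; ring)
  have hyh := two_mul_add_ne hy 1 (z := y + 1 / 2) (by push_cast; ring)
  obtain ⟨e0, e1, e2, e3⟩ := he (y + 1) hy1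
  obtain ⟨o1, o2, o3⟩ := ho y hy
  obtain ⟨o1', o2', o3'⟩ := ho (y + 1) hy1
  obtain ⟨o1h, o2h, o3h⟩ := ho (y + 1 / 2) hyh
  have o4h := dVal_four hq (2 * m + 1) _ hyh
  have o5h := dVal_five hq (2 * m + 1) _ hyh
  rw [← dVal_periodic hq _ (-1), show (6 * -1 + 5 : ℤ) = -1 by norm_num] at o5h
  rw [o2h] at o4h
  rw [o1h] at o5h
  have hM : (1 : ℤ) ≤ (m : ℤ) + 1 := by omega
  have pf := prodFact1_mul_even m
  have hpf := prodFact1_ne_zero (2 * m)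
  have hq2 := hq.sq_add_self_add_one
  have hq0 : -q ≠ 0 := neg_ne_zero.2 (hq.ne_zero (by norm_num))
  have ht : (2 : ℂ) ^ (m * m) ≠ 0 := pow_ne_zero _ two_ne_zero
  have hs : (-q) ^ m ≠ 0 := pow_ne_zero _ hq0
  have hp : q ^ m ≠ 0 := pow_ne_zero _ (hq.ne_zero (by norm_num))
  have hsp : ((-q) ^ m) ^ 2 = (q ^ m) ^ 2 := by rw [← pow_mul, mul_comm, pow_mul, neg_sq]; ring
  have a0 := evenZero_mul hM y
  have a1 := evenOne_mul hM y
  have a2 := evenTwo_mul hM y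
  have a3 := evenThree_mul hM y
  have t2 := oddOne_mul_oddThree (m + 1) y
  have t3 := oddTwo_sq hM y
  simp only [add_sub_cancel_right] at a0 a1 a2 a3 t2 t3
  push_cast at a0 a1 a2 a3 t2 t3
  rw [show 2 * (m + 1) = 2 * m + 2 by ring, two_pow_succ_mul_self, pow_succ (-q), pow_succ q]
  push_cast
  refine ⟨dVal_eq_of_recurrence hy ?_ one_ne_zero ?_, dVal_eq_of_recurrence hy ?_ one_ne_zero ?_,
    dVal_eq_of_recurrence hy ?_ one_ne_zero ?_, dVal_eq_of_recurrence hy ?_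
    (D := (y + 3 * (m + 1) / 2) * (y + 3 * (m + 1) / 2 - 1 / 2)) ?_ ?_⟩
  · rw [e0]
    exact mul_ne_zero (mul_ne_zero ht hpf) (mul_ne_zero (mul_ne_zero hs hp) (evenZero_ne_zero hy1 m))
  · rw [zero_sub, zero_add, o5h, o1h, e0, dVal_zero_odd hq m _ hy]
    push_cast
    linear_combination 2 * (2 ^ (m * m)) ^ 2 * (2 ^ m) ^ 2 * (-q ^ 2) *
      (((-q) ^ m) ^ 2 * (q ^ m) ^ 2 * evenZero (m + 1) y * evenZero m (y + 1) * pf +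
        prodFact1 (2 * m + 1) ^ 2 * (((-q) ^ m) ^ 2 * (q ^ m) ^ 2 * a0 +
          (y + 1 / 2) * oddOne m (y + 1 / 2) ^ 2 * (q ^ m) ^ 2 * hsp))
  · rw [e1]
    exact mul_ne_zero (mul_ne_zero ht hpf) (evenOne_ne_zero hy1 m)
  · rw [sub_self, dVal_zero_odd hq m _ hyh, o1, o1', e1]
    push_cast
    linear_combination 2 * (2 ^ (m * m)) ^ 2 * (2 ^ m) ^ 2 *
      (evenOne (m + 1) y * evenOne m (y + 1) * pf + prodFact1 (2 * m + 1) ^ 2 * a1)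
  · rw [e2]
    exact mul_ne_zero (mul_ne_zero ht hpf) (mul_ne_zero hs (evenTwo_ne_zero hy1 m))
  · rw [show (2 - 1 : ℤ) = 1 by norm_num, show (2 + 1 : ℤ) = 3 by norm_num, o2, o2', o1h, o3h, e2]
    push_cast
    linear_combination (2 ^ (m * m)) ^ 2 * (2 ^ m) ^ 2 * ((-q) ^ m) ^ 2 *
      (-2 * q * (evenTwo (m + 1) y * evenTwo m (y + 1)) * pf + prodFact1 (2 * m + 1) ^ 2 *
        (-2 * q * a2 - (2 * y + 1) * 2 * q * t2 -
          (2 * y + 2 * m + 2) * (oddTwo m y * oddTwo m (y + 1)) * hq2))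
  · rw [e3]
    exact mul_ne_zero (mul_ne_zero ht hpf) (mul_ne_zero (pow_ne_zero _ hs) (evenThree_ne_zero hy1 m))
  · refine mul_ne_zero (fun h => hy (-(3 * m + 3)) ?_) (fun h => hy (-(3 * m + 2)) ?_) <;>
      (push_cast; linear_combination 2 * h)
  · rw [show (3 - 1 : ℤ) = 2 by norm_num, show (3 + 1 : ℤ) = 4 by norm_num, o3, o3', o2h, o4h, e3]
    push_cast
    linear_combination (2 ^ (m * m)) ^ 2 * (2 ^ m) ^ 2 * (((-q) ^ m) ^ 2) ^ 2 *
      (2 * q ^ 2 * (evenThree (m + 1) y * evenThree m (y + 1)) *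
        ((y + 3 * (m + 1) / 2) * (y + 3 * (m + 1) / 2 - 1 / 2)) * pf +
        prodFact1 (2 * m + 1) ^ 2 *
        (2 * q ^ 2 * a3 - (2 * y + 1) * q * (1 - q) ^ 2 * t3 -
          (2 * y + 1) * q * ((y + 2 * (m + 1) - 1 / 2) * (y + (m + 1))) *
            (oddThree m y * oddThree m (y + 1)) * hq2))

lemma OddValues.succ {q : ℂ} (hq : IsPrimitiveRoot q 3) {m : ℕ} (ho : OddValues q m)
    (he : EvenValues q (m + 1)) : OddValues q (m + 1) := by
  intro y hy
  have hy1 := two_mul_add_ne hy 2 (z := y + 1) (by push_cast; ring)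
  have hyh := two_mul_add_ne hy 1 (z := y + 1 / 2) (by push_cast; ring)
  obtain ⟨o1, o2, o3⟩ := ho (y + 1) hy1
  obtain ⟨-, e1, e2, e3⟩ := he y hy
  obtain ⟨-, e1', e2', e3'⟩ := he (y + 1) hy1
  obtain ⟨e0h, e1h, e2h, e3h⟩ := he (y + 1 / 2) hyh
  have e4h := dVal_four hq (2 * (m + 1)) _ hyh
  rw [e2h] at e4h
  have hM : (1 : ℤ) ≤ (m : ℤ) + 1 := by omega
  have pf : 2 * (prodFact1 (2 * m + 1 + 2) * prodFact1 (2 * m + 1)) = prodFact1 (2 * m + 1 + 1) ^ 2 :=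
    prodFact1_mul_odd m
  have hpf := prodFact1_ne_zero (2 * m + 1)
  have hq2 := hq.sq_add_self_add_one
  have hq0 : -q ≠ 0 := neg_ne_zero.2 (hq.ne_zero (by norm_num))
  have hq1 : 1 - q ≠ 0 := sub_ne_zero.2 (hq.ne_one (by norm_num)).symm
  have ht : (2 : ℂ) ^ (m * m) * 2 ^ m ≠ 0 :=
    mul_ne_zero (pow_ne_zero _ two_ne_zero) (pow_ne_zero _ two_ne_zero)
  have hs : (-q) ^ m ≠ 0 := pow_ne_zero _ hq0
  have hsp : ((-q) ^ m * -q) ^ 2 * (q ^ m * q) = 1 := by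
    rw [← pow_succ, ← pow_succ, ← pow_mul, mul_comm (m + 1), pow_mul, neg_sq, ← pow_mul, ← pow_add,
      show 2 * (m + 1) + (m + 1) = 3 * (m + 1) by ring, pow_mul, hq.pow_eq_one, one_pow]
  have hX : y + (3 * (m + 1) + 1) / 2 ≠ 0 := fun h => hy (-(3 * m + 4)) (by
    push_cast; linear_combination 2 * h)
  have hZ : y + 3 * (m + 1) + 1 / 2 ≠ 0 := fun h => hy (-(6 * m + 7)) (by
    push_cast; linear_combination 2 * h)
  have a1 := oddOne_mul hM y
  have a2 := oddTwo_mul hM y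
  have a3 := oddThree_mul hM y
  have t1 := evenZero_mul_evenTwo hM y
  have t2 := evenOne_mul_evenThree hM y
  have t3 := evenTwo_sq hM y
  simp only [add_sub_cancel_right] at a1 a2 a3
  push_cast at a1 a2 a3 t1 t2 t3
  rw [show 2 * (m + 1) = 2 * m + 1 + 1 by ring, two_pow_succ_mul_self, pow_succ (-q) m] at *
  rw [show 2 * m + 1 + 1 + 1 = 2 * m + 1 + 2 by ring, pow_succ (2 : ℂ) m]
  push_cast at *
  refine ⟨dVal_eq_of_recurrence hy ?_ hX ?_, dVal_eq_of_recurrence hy ?_ hX ?_,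
    dVal_eq_of_recurrence hy ?_ hZ ?_⟩
  · rw [o1]
    exact mul_ne_zero (mul_ne_zero ht hpf) (oddOne_ne_zero hy1 m)
  · rw [sub_self, show (1 + 1 : ℤ) = 2 by norm_num, e0h, e2h, e1, e1', o1, pow_succ q m]
    push_cast
    linear_combination 4 * (2 ^ (m * m)) ^ 2 * (2 ^ m) ^ 4 *
      ((m + 1) * (oddOne (m + 1) y * oddOne m (y + 1) * (y + (3 * (m + 1) + 1) / 2)) * pf +
        prodFact1 (2 * m + 1 + 1) ^ 2 * ((m + 1) * a1 +
          (2 * y + 1) * ((-q) ^ m * -q) ^ 2 * (q ^ m * q) * t1 +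
          (2 * y + 1) * (y + 2 * (m + 1) + 1 / 2) * (evenOne (m + 1) y * evenOne (m + 1) (y + 1)) *
            hsp))
  · rw [o2]
    exact mul_ne_zero (mul_ne_zero ht hpf) (mul_ne_zero (mul_ne_zero hs hq1) (oddTwo_ne_zero hy1 m))
  · rw [show (2 - 1 : ℤ) = 1 by norm_num, show (2 + 1 : ℤ) = 3 by norm_num, e1h, e3h, e2, e2', o2]
    push_cast
    linear_combination 4 * (2 ^ (m * m)) ^ 2 * (2 ^ m) ^ 4 * ((-q) ^ m) ^ 2 *
      ((m + 1) * (-q) * (1 - q) ^ 2 *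
          (oddTwo (m + 1) y * oddTwo m (y + 1) * (y + (3 * (m + 1) + 1) / 2)) * pf +
        prodFact1 (2 * m + 1 + 1) ^ 2 * ((m + 1) * (-q) * (1 - q) ^ 2 * a2 +
          (2 * y + 1) * q ^ 2 * t2 - q * (m + 1) * (y + (m + 1) + 1 / 2) *
            (evenTwo (m + 1) y * evenTwo (m + 1) (y + 1)) * hq2))
  · rw [o3]
    exact mul_ne_zero (mul_ne_zero ht hpf) (mul_ne_zero (mul_ne_zero (mul_ne_zero hq0
      (pow_ne_zero _ hs)) two_ne_zero) (oddThree_ne_zero hy1 m))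
  · rw [show (3 - 1 : ℤ) = 2 by norm_num, show (3 + 1 : ℤ) = 4 by norm_num, e2h, e4h, e3, e3', o3]
    push_cast
    linear_combination 4 * (2 ^ (m * m)) ^ 2 * (2 ^ m) ^ 4 * (((-q) ^ m) ^ 2) ^ 2 * q ^ 4 *
      ((m + 1) * 4 *
          (oddThree (m + 1) y * oddThree m (y + 1) * (y + 3 * (m + 1) + 1 / 2)) * pf +
        prodFact1 (2 * m + 1 + 1) ^ 2 * ((m + 1) * 4 * a3 + (2 * y + 1) * t3))

lemma dVal_one (q : ℂ) (k : ℤ) (x : ℂ) : dVal q 1 k x = aF ℂ q k := by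
  simp [dVal, binVal]

lemma evenValues_and_oddValues {q : ℂ} (hq : IsPrimitiveRoot q 3) (m : ℕ) :
    EvenValues q m ∧ OddValues q m := by
  induction m with
  | zero =>
    have h1 : aF ℂ q 1 = 1 := by simp [aF]
    have h2 : aF ℂ q 2 = 1 - q := by
      simp [aF, Finset.sum_range_succ, sub_eq_add_neg]
    have h3 : aF ℂ q 3 = -q * 2 := by
      simp only [aF, Int.reduceToNat, Finset.sum_range_succ]
      norm_num
      linear_combination hq.sq_add_self_add_one
    refine ⟨fun y _ => ?_, fun y _ => ?_⟩
    · simp [dVal, evenZero, evenOne, evenTwo, evenThree, upTower_of_nonpos, downTower_of_nonpos,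
        prodFact1]
    · simp [dVal_one, h1, h2, h3, oddOne, oddTwo, oddThree, upTower_of_nonpos, downTower_of_nonpos,
        prodFact1]
  | succ m ih =>
    have he := ih.1.succ hq ih.2
    exact ⟨he, ih.2.succ hq he⟩

lemma eq_of_generic_eval_eq {P Q : Polynomial ℂ}
    (h : ∀ y : ℂ, (∀ a : ℤ, 2 * y ≠ a) → P.eval (2 * y) = Q.eval (2 * y)) : P = Q := by
  refine Polynomial.eq_of_infinite_eval_eq P Q
    (Set.Infinite.mono (s := (Set.range fun a : ℤ => (a : ℂ))ᶜ) (fun x hx => ?_) fun hf => ?_)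
  · have := h (x / 2) fun a ha => hx ⟨a, by simp only [← ha]; ring⟩
    rwa [mul_div_cancel₀ x two_ne_zero] at this
  · refine not_countable_complex ?_
    rw [← Set.union_compl_self (Set.range fun a : ℤ => (a : ℂ))]
    exact (Set.countable_range _).union hf.countable

lemma eval_poch (c y : ℂ) (m : ℤ) :
    (poch (halfX + Polynomial.C c) m).eval (2 * y) = pochVal (y + c) m := by
  simp only [poch, halfX, pochVal, eval_prod, eval_add, eval_mul, eval_C, eval_X, eval_natCast]
  refine Finset.prod_congr rfl fun t _ => ?_
  ring

lemma eval_prod_poch_up {n : ℕ} {f : ℕ → ℂ} {e : ℕ → ℤ} {y : ℂ} (m : ℤ) (z : ℂ)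
    (hf : ∀ i, y + f i = z + 3 * i) (he : ∀ i : ℕ, e i = m - 2 * i) (hm : m ≤ 2 * n) :
    (∏ i ∈ range n, poch (halfX + Polynomial.C (f i)) (e i)).eval (2 * y) = upTower m z := by
  simp only [eval_prod, eval_poch, upTower_eq_prod _ hm, hf, he]

lemma eval_prod_poch_down {n : ℕ} {f : ℕ → ℂ} {e : ℕ → ℤ} {y : ℂ} (m : ℤ) (z : ℂ)
    (hf : ∀ i : ℕ, y + f i = z - i) (he : ∀ i : ℕ, e i = m - 2 * i) (hm : m ≤ 2 * n) :
    (∏ i ∈ range n, poch (halfX + Polynomial.C (f i)) (e i)).eval (2 * y) = downTower m z := by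
  simp only [eval_prod, eval_poch, downTower_eq_prod _ hm, hf, he]

/-- the evaluations of d_{n,k}(x,q) for q a primitive third root of unity,
with q^{1/2} := -q².  All products over i ≥ 0 are truncated at i = n, beyond which every
factor equals 1. -/
theorem statement11 (q : ℂ) (hq : IsPrimitiveRoot q 3) (k : ℤ) (n : ℕ) (hn : 1 ≤ n) :
    (dF ℂ n (6 * k + 1) q =
      Polynomial.C ((2 : ℂ) ^ (n / 2 * ((n + 1) / 2)) * prodFact1 n) *
      (∏ i ∈ Finset.range n,
        poch (halfX + Polynomial.C (3 * (i : ℂ) + 1)) (((n : ℤ) - 4 * i) / 2) *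
        poch (halfX + Polynomial.C (3 * (i : ℂ) + 3)) (((n : ℤ) - 4 * i - 3) / 2)) *
      (∏ i ∈ Finset.range n,
        poch (halfX + Polynomial.C ((n : ℂ) - i + 1 / 2)) (((n : ℤ) - 4 * i - 1) / 2) *
        poch (halfX + Polynomial.C ((n : ℂ) - i - 1 / 2)) (((n : ℤ) - 4 * i - 2) / 2))) ∧
    (dF ℂ n (6 * k + 2) q =
      Polynomial.C ((2 : ℂ) ^ (n / 2 * ((n + 1) / 2)) * (3 : ℂ) ^ (-((n / 2 : ℕ) : ℤ)) *
          (1 - q) ^ n * prodFact1 n) *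
      (∏ i ∈ Finset.range n,
        poch (halfX + Polynomial.C ((n : ℂ) - i)) (((n : ℤ) - 4 * i) / 2) *
        poch (halfX + Polynomial.C ((n : ℂ) - i)) (((n : ℤ) - 4 * i - 3) / 2)) *
      (∏ i ∈ Finset.range n,
        poch (halfX + Polynomial.C (3 * (i : ℂ) + 3 / 2)) (((n : ℤ) - 4 * i - 1) / 2) *
        poch (halfX + Polynomial.C (3 * (i : ℂ) + 5 / 2)) (((n : ℤ) - 4 * i - 2) / 2))) ∧
    (dF ℂ n (6 * k + 3) q =
      Polynomial.C ((-q) ^ n * (2 : ℂ) ^ ((n + 1) / 2 * ((n + 2) / 2) - n / 2) * prodFact1 n) *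
      (∏ i ∈ Finset.range n,
        poch (halfX + Polynomial.C (3 * (i : ℂ) + 2)) (((n : ℤ) - 4 * i - 1) / 2) *
        poch (halfX + Polynomial.C (3 * (i : ℂ) + 2)) (((n : ℤ) - 4 * i - 2) / 2)) *
      (∏ i ∈ Finset.range n,
        poch (halfX + Polynomial.C (2 * ((n / 2 : ℕ) : ℂ) - i + 1 / 2)) (((n : ℤ) - 4 * i) / 2) *
        poch (halfX + Polynomial.C (2 * (((n - 1) / 2 : ℕ) : ℂ) - i + 3 / 2))
          (((n : ℤ) - 4 * i - 3) / 2))) ∧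
    (dF ℂ n (6 * k + 4) q = Polynomial.C ((-q ^ 2 : ℂ) ^ (-(n : ℤ))) * dF ℂ n (6 * k + 2) q) ∧
    (dF ℂ n (6 * k + 5) q = Polynomial.C (q ^ (-(n : ℤ))) * dF ℂ n (6 * k + 1) q) ∧
    (dF ℂ (2 * n + 1) (6 * k) q = 0) ∧
    (dF ℂ (2 * n) (6 * k) q =
      Polynomial.C ((-q ^ 2 : ℂ) ^ n * (2 : ℂ) ^ (n ^ 2) *
          ∏ i ∈ Finset.range n, (i.factorial : ℂ) / ((2 * n - 1 - i).factorial : ℂ)) *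
      ∏ i ∈ Finset.range n,
        poch (halfX + Polynomial.C (3 * (i : ℂ) + 1 / 2)) ((n : ℤ) - 2 * i) *
        poch (halfX + Polynomial.C (3 * (i : ℂ) + 7 / 2)) ((n : ℤ) - 2 * (i + 1)) *
        (poch (halfX + Polynomial.C (2 * (n : ℂ) - i)) ((n : ℤ) - 2 * i - 1)) ^ 2) := by
  have hq3 := hq.pow_eq_one
  have hq2 : (-q ^ 2)⁻¹ = -q := inv_eq_of_mul_eq_one_right (by linear_combination hq3)
  have hq1 : q⁻¹ = q ^ 2 := inv_eq_of_mul_eq_one_right (by linear_combination hq3)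
  rw [dF_periodic hq, dF_periodic hq, dF_periodic hq, dF_periodic hq, dF_periodic hq,
    ← add_zero (6 * k), dF_periodic hq, dF_periodic hq]
  have h3 (m : ℕ) : (3 : ℂ) ^ (-(m : ℤ)) * (1 - q) ^ (2 * m) = (-q) ^ m := by
    rw [zpow_neg, zpow_natCast, ← inv_pow, pow_mul, ← mul_pow]
    congr 1
    linear_combination 3⁻¹ * hq.sq_add_self_add_one
  refine ⟨eq_of_generic_eval_eq fun y hy => ?_, eq_of_generic_eval_eq fun y hy => ?_,
    eq_of_generic_eval_eq fun y hy => ?_, eq_of_generic_eval_eq fun y hy => ?_,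
    eq_of_generic_eval_eq fun y hy => ?_, eq_of_generic_eval_eq fun y hy => ?_,
    eq_of_generic_eval_eq fun y hy => ?_⟩
  · obtain ⟨m, rfl | rfl⟩ := n.even_or_odd'
    · obtain ⟨-, h, -, -⟩ := (evenValues_and_oddValues hq m).1 y hy
      rw [eval_dF, eval_mul, eval_mul, eval_C, Finset.prod_mul_distrib, Finset.prod_mul_distrib,
        eval_mul, eval_mul, h,
        eval_prod_poch_up (m) (y + 1)
          (fun i => by ring) (fun i => by omega) (by omega),
        eval_prod_poch_up (m - 2) (y + 3)
          (fun i => by ring) (fun i => by omega) (by omega),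
        eval_prod_poch_down (m - 1) (y + 2 * (m : ℤ) + 1 / 2)
          (fun i => by push_cast; ring) (fun i => by omega) (by omega),
        eval_prod_poch_down (m - 1) (y + 2 * (m : ℤ) - 1 / 2)
          (fun i => by push_cast; ring) (fun i => by omega) (by omega),
        evenOne, show 2 * m / 2 * ((2 * m + 1) / 2) = m * m by congr 1 <;> omega]
      ring
    · obtain ⟨h, -, -⟩ := (evenValues_and_oddValues hq m).2 y hy
      rw [eval_dF, eval_mul, eval_mul, eval_C, Finset.prod_mul_distrib, Finset.prod_mul_distrib,
        eval_mul, eval_mul, h,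
        eval_prod_poch_up (m) (y + 1)
          (fun i => by ring) (fun i => by omega) (by omega),
        eval_prod_poch_up (m - 1) (y + 3)
          (fun i => by ring) (fun i => by omega) (by omega),
        eval_prod_poch_down (m) (y + 2 * (m : ℤ) + 3 / 2)
          (fun i => by push_cast; ring) (fun i => by omega) (by omega),
        eval_prod_poch_down (m - 1) (y + 2 * (m : ℤ) + 1 / 2)
          (fun i => by push_cast; ring) (fun i => by omega) (by omega),
        oddOne, show (2 * m + 1) / 2 * ((2 * m + 1 + 1) / 2) = m * (m + 1) by congr 1 <;> omega]
      ring
  · obtain ⟨m, rfl | rfl⟩ := n.even_or_odd'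
    · obtain ⟨-, -, h, -⟩ := (evenValues_and_oddValues hq m).1 y hy
      rw [eval_dF, eval_mul, eval_mul, eval_C, Finset.prod_mul_distrib, Finset.prod_mul_distrib,
        eval_mul, eval_mul, h,
        eval_prod_poch_down (m) (y + 2 * (m : ℤ))
          (fun i => by push_cast; ring) (fun i => by omega) (by omega),
        eval_prod_poch_down (m - 2) (y + 2 * (m : ℤ))
          (fun i => by push_cast; ring) (fun i => by omega) (by omega),
        eval_prod_poch_up (m - 1) (y + 3 / 2)
          (fun i => by ring) (fun i => by omega) (by omega),
        eval_prod_poch_up (m - 1) (y + 5 / 2)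
          (fun i => by ring) (fun i => by omega) (by omega),
        evenTwo, show 2 * m / 2 * ((2 * m + 1) / 2) = m * m by congr 1 <;> omega, show 2 * m / 2 = m by omega, ← h3]
      ring
    · obtain ⟨-, h, -⟩ := (evenValues_and_oddValues hq m).2 y hy
      rw [eval_dF, eval_mul, eval_mul, eval_C, Finset.prod_mul_distrib, Finset.prod_mul_distrib,
        eval_mul, eval_mul, h,
        eval_prod_poch_down (m) (y + 2 * (m : ℤ) + 1)
          (fun i => by push_cast; ring) (fun i => by omega) (by omega),
        eval_prod_poch_down (m - 1) (y + 2 * (m : ℤ) + 1)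
          (fun i => by push_cast; ring) (fun i => by omega) (by omega),
        eval_prod_poch_up (m) (y + 3 / 2)
          (fun i => by ring) (fun i => by omega) (by omega),
        eval_prod_poch_up (m - 1) (y + 5 / 2)
          (fun i => by ring) (fun i => by omega) (by omega),
        oddTwo, show (2 * m + 1) / 2 * ((2 * m + 1 + 1) / 2) = m * (m + 1) by congr 1 <;> omega, show (2 * m + 1) / 2 = m by omega, ← h3]
      ring
  · obtain ⟨m, rfl | rfl⟩ := n.even_or_odd'
    · obtain ⟨-, -, -, h⟩ := (evenValues_and_oddValues hq m).1 y hy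
      rw [eval_dF, eval_mul, eval_mul, eval_C, Finset.prod_mul_distrib, Finset.prod_mul_distrib,
        eval_mul, eval_mul, h,
        eval_prod_poch_up (m - 1) (y + 2)
          (fun i => by ring) (fun i => by omega) (by omega),
        eval_prod_poch_up (m - 1) (y + 2)
          (fun i => by ring) (fun i => by omega) (by omega),
        eval_prod_poch_down (m) (y + 2 * (m : ℤ) + 1 / 2)
          (fun i => by rw [show 2 * m / 2 = m by omega]; push_cast; ring) (fun i => by omega) (by omega),
        eval_prod_poch_down (m - 2) (y + 2 * (m : ℤ) - 1 / 2)
          (fun i => by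
            rw [show (2 * m - 1) / 2 = m - 1 by omega, Nat.cast_pred (by omega)]; push_cast; ring)
          (fun i => by omega) (by omega), evenThree, show (2 * m + 1) / 2 * ((2 * m + 2) / 2) - 2 * m / 2 = m * m by
          rw [show (2 * m + 1) / 2 = m by omega, show (2 * m + 2) / 2 = m + 1 by omega,
            show 2 * m / 2 = m by omega, mul_add, mul_one, Nat.add_sub_cancel]]
      ring
    · obtain ⟨-, -, h⟩ := (evenValues_and_oddValues hq m).2 y hy
      rw [eval_dF, eval_mul, eval_mul, eval_C, Finset.prod_mul_distrib, Finset.prod_mul_distrib,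
        eval_mul, eval_mul, h,
        eval_prod_poch_up (m) (y + 2)
          (fun i => by ring) (fun i => by omega) (by omega),
        eval_prod_poch_up (m - 1) (y + 2)
          (fun i => by ring) (fun i => by omega) (by omega),
        eval_prod_poch_down (m) (y + 2 * (m : ℤ) + 1 / 2)
          (fun i => by rw [show (2 * m + 1) / 2 = m by omega]; push_cast; ring) (fun i => by omega) (by omega),
        eval_prod_poch_down (m - 1) (y + 2 * (m : ℤ) + 3 / 2)
          (fun i => by
            rw [show (2 * m + 1 - 1) / 2 = m by omega]; push_cast; ring)
          (fun i => by omega) (by omega), oddThree, show (2 * m + 1 + 1) / 2 * ((2 * m + 1 + 2) / 2) - (2 * m + 1) / 2 = m * m + m + 1 by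
          rw [show (2 * m + 1 + 1) / 2 = m + 1 by omega, show (2 * m + 1 + 2) / 2 = m + 1 by omega,
            show (2 * m + 1) / 2 = m by omega, Nat.sub_eq_iff_eq_add (by nlinarith)]
          ring]
      ring
  · rw [eval_mul, eval_C, eval_dF, eval_dF, dVal_four hq n _ hy, zpow_neg, zpow_natCast, ← inv_pow,
      hq2]
  · rw [eval_mul, eval_C, eval_dF, eval_dF, dVal_five hq n _ hy, zpow_neg, zpow_natCast, ← inv_pow,
      hq1]
  · rw [eval_dF, dVal_zero_odd hq n _ hy, eval_zero]
  · obtain ⟨h, -⟩ := (evenValues_and_oddValues hq n).1 y hy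
    have hf : ∏ i ∈ range n, (i.factorial : ℂ) / ((2 * n - 1 - i).factorial : ℂ) =
        prodFact1 (2 * n) := by
      rw [prodFact1, show (2 * n + 1) / 2 = n by omega]
    rw [eval_dF, eval_mul, eval_C, Finset.prod_mul_distrib, Finset.prod_mul_distrib,
      Finset.prod_pow, eval_mul, eval_mul, eval_pow, h, hf,
      eval_prod_poch_up n (y + 1 / 2) (fun i => by ring) (fun i => rfl) (by omega),
      eval_prod_poch_up (n - 2) (y + 7 / 2) (fun i => by ring) (fun i => by ring) (by omega),
      eval_prod_poch_down (n - 1) (y + 2 * (n : ℤ)) (fun i => by push_cast; ring)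
        (fun i => by ring) (by omega), evenZero, ← mul_pow, show -q * q = -q ^ 2 by ring]
    ring

end
end

section
/- The number of alternating sign matrices of size n equals ∏_{i=0}^{n−1} (3i+1)!/(n+i)!. -/
open Finset

noncomputable section

/-- A matrix is an alternating sign matrix: entries in {-1,0,1}, all row and column sums 1,
and all partial row and column sums (from the start) equal to 0 or 1. -/
def IsASM {n : ℕ} (A : Matrix (Fin n) (Fin n) ℤ) : Prop :=
  (∀ i j, A i j = -1 ∨ A i j = 0 ∨ A i j = 1) ∧
  (∀ i, ∑ j, A i j = 1) ∧
  (∀ j, ∑ i, A i j = 1) ∧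
  (∀ i j, (∑ j' ∈ Finset.Iic j, A i j') = 0 ∨ (∑ j' ∈ Finset.Iic j, A i j') = 1) ∧
  (∀ i j, (∑ i' ∈ Finset.Iic i, A i' j) = 0 ∨ (∑ i' ∈ Finset.Iic i, A i' j) = 1)

open scoped Classical in
/-- The (finite) set of all alternating sign matrices of size n; since every ASM has entries
in {-1,0,1}, it occurs in the image below. -/
noncomputable def asmFinset (n : ℕ) : Finset (Matrix (Fin n) (Fin n) ℤ) :=
  ((Finset.univ : Finset (Matrix (Fin n) (Fin n) (Fin 3))).image
    (fun B => Matrix.of fun i j => ((B i j : ℕ) : ℤ) - 1)).filter (fun A => IsASM A)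

/-- μ(A): the number of entries of A equal to -1. -/
def asmMu {n : ℕ} (A : Matrix (Fin n) (Fin n) ℤ) : ℕ :=
  (Finset.univ.filter (fun p : Fin n × Fin n => A p.1 p.2 = -1)).card

/-- The Q-enumeration A_n(Q) = ∑_A Q^{μ(A)} of alternating sign matrices of size n. -/
noncomputable def asmEnum {S : Type*} [CommRing S] (n : ℕ) (Q : S) : S :=
  ∑ A ∈ asmFinset n, Q ^ asmMu A

section SixVertex

variable {K : Type*} [Field K]

/-- The weight of a vertex given the states of its incoming horizontal and vertical edges, then of its
outgoing ones; `x` and `y` are the spectral parameters of the row and the column. -/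
def vertexWeight (ω x y : K) : Bool → Bool → Bool → Bool → K
  | false, false, false, false => ω * x - y
  | true, true, true, true => ω * x - y
  | false, true, false, true => ω * y - x
  | true, false, true, false => ω * y - x
  | false, false, true, true => (ω - 1) * x
  | true, true, false, false => (ω - 1) * y
  | _, _, _, _ => 0

/-- The weight of the crossing of two rows with parameters `x₁` and `x₂`. -/
def crossingWeight (ω x₁ x₂ : K) : Bool → Bool → Bool → Bool → K
  | false, false, false, false => ω * x₁ - x₂
  | true, true, true, true => ω * x₁ - x₂
  | false, true, false, true => (ω - 1) * x₂
  | true, false, true, false => (ω - 1) * x₁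
  | false, true, true, false => (1 + ω) * (x₁ - x₂)
  | true, false, false, true => (1 + ω) * (x₁ - x₂)
  | _, _, _, _ => 0

/-- The weight of two vertically adjacent vertices, summed over the state of their common edge. -/
def pairWeight (ω x₁ x₂ y : K) (h₁ h₂ v v' k₁ k₂ : Bool) : K :=
  ∑ m, vertexWeight ω x₁ y h₁ v k₁ m * vertexWeight ω x₂ y h₂ m k₂ v'

set_option maxHeartbeats 2000000 in
/-- The Yang–Baxter equation at a cube root of unity. -/
theorem yang_baxter {ω : K} (hω : ω ^ 2 + ω + 1 = 0) (x₁ x₂ y : K) (h₁ h₂ v v' k₁ k₂ : Bool) :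
    ∑ g₁, ∑ g₂, crossingWeight ω x₁ x₂ h₁ h₂ g₁ g₂ * pairWeight ω x₁ x₂ y g₁ g₂ v v' k₁ k₂ =
      ∑ g₁, ∑ g₂, pairWeight ω x₂ x₁ y h₁ h₂ v v' g₁ g₂ * crossingWeight ω x₁ x₂ g₁ g₂ k₁ k₂ := by
  have hω' : ω ^ 2 = - ω - 1 := by linear_combination hω
  have h3 : ω ^ 3 = 1 := by linear_combination (ω - 1) * hω
  cases h₁ <;> cases h₂ <;> cases v <;> cases v' <;> cases k₁ <;> cases k₂ <;>
    simp only [pairWeight, vertexWeight, crossingWeight, Fintype.sum_bool, mul_zero, zero_mul,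
      add_zero, zero_add] <;> try ring1
  all_goals ring_nf
  all_goals simp only [h3, hω']
  all_goals ring1

/-- The weight of a row with `n` vertices: `s` and `t` are the states of the vertical edges above
and below it, `h` and `k` those of its first and last horizontal edges. -/
def rowWeight (ω x : K) : (n : ℕ) → (ℕ → K) → Bool → Bool → (Fin n → Bool) → (Fin n → Bool) → K
  | 0, _, h, k, _, _ => if h = k then 1 else 0
  | n + 1, y, h, k, s, t => ∑ g, vertexWeight ω x (y 0) h (s 0) g (t 0) *
      rowWeight ω x n (fun i => y (i + 1)) g k (Fin.tail s) (Fin.tail t)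

theorem sum_fun_succ_bool {M : Type*} [AddCommMonoid M] {n : ℕ} (f : (Fin (n + 1) → Bool) → M) :
    ∑ s, f s = ∑ b, ∑ s : Fin n → Bool, f (Fin.cons b s) := by
  rw [← Fintype.sum_prod_type']
  exact (Fintype.sum_equiv (Fin.consEquiv fun _ => Bool) _ _ fun _ => rfl).symm

/-- The weight of two adjacent rows, summed over the states of the edges between them. -/
def twoRowWeight (ω x₁ x₂ : K) (n : ℕ) (y : ℕ → K) (h₁ h₂ k₁ k₂ : Bool) (s t : Fin n → Bool) : K :=
  ∑ u, rowWeight ω x₁ n y h₁ k₁ s u * rowWeight ω x₂ n y h₂ k₂ u t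

theorem twoRowWeight_succ (ω x₁ x₂ : K) (n : ℕ) (y : ℕ → K) (h₁ h₂ k₁ k₂ : Bool)
    (s t : Fin (n + 1) → Bool) :
    twoRowWeight ω x₁ x₂ (n + 1) y h₁ h₂ k₁ k₂ s t =
      ∑ g₁, ∑ g₂, pairWeight ω x₁ x₂ (y 0) h₁ h₂ (s 0) (t 0) g₁ g₂ *
        twoRowWeight ω x₁ x₂ n (fun i => y (i + 1)) g₁ g₂ k₁ k₂ (Fin.tail s) (Fin.tail t) := by
  simp only [twoRowWeight, sum_fun_succ_bool, rowWeight, pairWeight, Fin.cons_zero, Fin.tail_cons,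
    Finset.mul_sum, Fintype.sum_bool, ← Finset.sum_add_distrib]
  refine Finset.sum_congr rfl fun u _ => ?_
  ring

theorem crossing_twoRowWeight {ω : K} (hω : ω ^ 2 + ω + 1 = 0) (x₁ x₂ : K) (n : ℕ) (y : ℕ → K)
    (h₁ h₂ k₁ k₂ : Bool) (s t : Fin n → Bool) :
    ∑ g₁, ∑ g₂, crossingWeight ω x₁ x₂ h₁ h₂ g₁ g₂ * twoRowWeight ω x₁ x₂ n y g₁ g₂ k₁ k₂ s t =
      ∑ g₁, ∑ g₂, twoRowWeight ω x₂ x₁ n y h₁ h₂ g₁ g₂ s t *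
        crossingWeight ω x₁ x₂ g₁ g₂ k₁ k₂ := by
  induction n generalizing y h₁ h₂ with
  | zero =>
    simp only [twoRowWeight, rowWeight, Finset.univ_unique, Finset.sum_singleton, Fintype.sum_bool]
    cases h₁ <;> cases h₂ <;> cases k₁ <;> cases k₂ <;> simp
  | succ n ih =>
    have hyb := yang_baxter hω x₁ x₂ (y 0) h₁ h₂ (s 0) (t 0)
    have ih' := fun g₁ g₂ => ih (fun i => y (i + 1)) g₁ g₂ (Fin.tail s) (Fin.tail t)
    simp only [twoRowWeight_succ]
    simp only [Fintype.sum_bool] at hyb ih' ⊢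
    linear_combination
      twoRowWeight ω x₁ x₂ n (fun i => y (i + 1)) true true k₁ k₂ (Fin.tail s) (Fin.tail t) *
        hyb true true +
      twoRowWeight ω x₁ x₂ n (fun i => y (i + 1)) true false k₁ k₂ (Fin.tail s) (Fin.tail t) *
        hyb true false +
      twoRowWeight ω x₁ x₂ n (fun i => y (i + 1)) false true k₁ k₂ (Fin.tail s) (Fin.tail t) *
        hyb false true +
      twoRowWeight ω x₁ x₂ n (fun i => y (i + 1)) false false k₁ k₂ (Fin.tail s) (Fin.tail t) *
        hyb false false +
      pairWeight ω x₂ x₁ (y 0) h₁ h₂ (s 0) (t 0) true true * ih' true true +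
      pairWeight ω x₂ x₁ (y 0) h₁ h₂ (s 0) (t 0) true false * ih' true false +
      pairWeight ω x₂ x₁ (y 0) h₁ h₂ (s 0) (t 0) false true * ih' false true +
      pairWeight ω x₂ x₁ (y 0) h₁ h₂ (s 0) (t 0) false false * ih' false false

/-- The row-to-row transfer matrix. -/
def transfer (ω : K) (n : ℕ) (y : ℕ → K) (x : K) : Matrix (Fin n → Bool) (Fin n → Bool) K :=
  Matrix.of (rowWeight ω x n y false true)

theorem transfer_commute {ω : K} (hω : ω ^ 2 + ω + 1 = 0) (h3 : (3 : K) ≠ 0) (n : ℕ) (y : ℕ → K)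
    (x₁ x₂ : K) : Commute (transfer ω n y x₁) (transfer ω n y x₂) := by
  have key : ∀ x₁ x₂ : K, ω * x₁ - x₂ ≠ 0 →
      Commute (transfer ω n y x₁) (transfer ω n y x₂) := by
    intro x₁ x₂ hne
    ext s t
    have h := crossing_twoRowWeight hω x₁ x₂ n y false false true true s t
    simp only [Fintype.sum_bool, crossingWeight, zero_mul, mul_zero, add_zero, zero_add] at h
    rw [mul_comm (twoRowWeight _ _ _ _ _ _ _ _ _ _ _)] at h
    exact mul_left_cancel₀ hne h
  by_cases h1 : ω * x₁ - x₂ = 0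
  · by_cases h2 : ω * x₂ - x₁ = 0
    · have hx : x₁ = 0 := by
        refine (mul_eq_zero.1 (?_ : 3 * x₁ = 0)).resolve_left h3
        linear_combination (2 - ω) * x₁ * hω - (1 - ω) * (ω * h1 + h2)
      have hx' : x₂ = 0 := by simpa [hx] using h1
      rw [hx, hx']
    · exact (key x₂ x₁ h2).symm
  · exact key x₁ x₂ h1

theorem transfer_cons_false_false (ω : K) (n : ℕ) (y : ℕ → K) (x : K) (s t : Fin n → Bool) :
    transfer ω (n + 1) y x (Fin.cons false s) (Fin.cons false t) =
      (ω * x - y 0) * transfer ω n (fun i => y (i + 1)) x s t := by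
  simp [transfer, rowWeight, vertexWeight]

theorem transfer_cons_false_true (ω : K) (n : ℕ) (y : ℕ → K) (x : K) (s t : Fin n → Bool) :
    transfer ω (n + 1) y x (Fin.cons false s) (Fin.cons true t) =
      (ω - 1) * x * rowWeight ω x n (fun i => y (i + 1)) true true s t := by
  simp [transfer, rowWeight, vertexWeight]

theorem transfer_cons_true_false (ω : K) (n : ℕ) (y : ℕ → K) (x : K) (s t : Fin n → Bool) :
    transfer ω (n + 1) y x (Fin.cons true s) (Fin.cons false t) = 0 := by
  simp [transfer, rowWeight, vertexWeight]

theorem transfer_cons_true_true (ω : K) (n : ℕ) (y : ℕ → K) (x : K) (s t : Fin n → Bool) :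
    transfer ω (n + 1) y x (Fin.cons true s) (Fin.cons true t) =
      (ω * y 0 - x) * transfer ω n (fun i => y (i + 1)) x s t := by
  simp [transfer, rowWeight, vertexWeight]

theorem prod_transfer_cons_true (ω : K) (n : ℕ) (y : ℕ → K) (xs : List K) (s t : Fin n → Bool) :
    (xs.map (transfer ω (n + 1) y)).prod (Fin.cons true s) (Fin.cons true t) =
      (xs.map fun x => ω * y 0 - x).prod *
        (xs.map (transfer ω n fun i => y (i + 1))).prod s t := by
  induction xs generalizing s with
  | nil =>
    simp only [List.map_nil, List.prod_nil, one_mul, Matrix.one_apply,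
      (Fin.cons_right_injective _).eq_iff]
  | cons x xs ih =>
    simp only [List.map_cons, List.prod_cons, Matrix.mul_apply, sum_fun_succ_bool, Fintype.sum_bool,
      transfer_cons_true_false, transfer_cons_true_true, zero_mul, Finset.sum_const_zero, add_zero,
      ih, Finset.mul_sum]
    exact Finset.sum_congr rfl fun u _ => by ring

theorem rowWeight_true_true_false (ω x : K) (n : ℕ) (y : ℕ → K) (t : Fin n → Bool) :
    rowWeight ω x n y true true (fun _ => false) t =
      if t = fun _ => false then ∏ j ∈ range n, (ω * y j - x) else 0 := by
  induction n generalizing y with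
  | zero => simp [rowWeight, Subsingleton.elim t fun _ => false]
  | succ n ih =>
    have h : Fin.tail (fun _ : Fin (n + 1) => false) = fun _ => false := rfl
    rw [← Fin.cons_self_tail t]
    have hc : (fun _ : Fin (n + 1) => false) = Fin.cons false (fun _ => false) := by
      rw [← h]; exact (Fin.cons_self_tail _).symm
    rw [rowWeight, h]
    simp only [Fin.cons_zero, Fin.tail_cons, Fintype.sum_bool]
    cases h0 : t 0
    · simp only [vertexWeight, ih, zero_mul, add_zero, hc, (Fin.cons_right_injective _).eq_iff,
        Finset.prod_range_succ', mul_ite, mul_zero]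
      simp only [mul_comm]
    · simp only [vertexWeight, zero_mul, add_zero]
      rw [if_neg]
      intro h; simpa using congrFun h 0

/-- The partition function of the six-vertex model with domain wall boundary conditions. -/
def partitionFunction (ω : K) (n : ℕ) (x y : ℕ → K) : K :=
  (((List.range n).map x).map (transfer ω n y)).prod (fun _ => false) (fun _ => true)

theorem partitionFunction_comp_perm {ω : K} (hω : ω ^ 2 + ω + 1 = 0) (h3 : (3 : K) ≠ 0) (n : ℕ)
    (x y : ℕ → K) (σ : Equiv.Perm ℕ) (hσ : ∀ i, σ i < n ↔ i < n) :
    partitionFunction ω n (x ∘ σ) y = partitionFunction ω n x y := by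
  have hperm : ((List.range n).map σ).Perm (List.range n) := by
    rw [List.perm_ext_iff_of_nodup (List.nodup_range.map σ.injective) List.nodup_range]
    intro a
    simp only [List.mem_map, List.mem_range]
    constructor
    · rintro ⟨i, hi, rfl⟩; exact (hσ i).2 hi
    · intro ha; exact ⟨σ.symm a, (hσ _).1 (by simpa using ha), by simp⟩
  have hprod : ((((List.range n).map σ).map x).map (transfer ω n y)).prod =
      (((List.range n).map x).map (transfer ω n y)).prod := by
    refine List.Perm.prod_eq' ((hperm.map x).map _) ?_
    rw [List.pairwise_map]
    exact List.pairwise_of_forall fun _ _ => transfer_commute hω h3 n y _ _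
  rw [partitionFunction, partitionFunction, ← hprod, List.map_map (g := x)]

theorem const_eq_cons (n : ℕ) (b : Bool) :
    (fun _ : Fin (n + 1) => b) = Fin.cons b (fun _ => b) :=
  (Fin.cons_self_tail (fun _ : Fin (n + 1) => b)).symm

theorem partitionFunction_succ_of_eq (ω : K) (n : ℕ) (x y : ℕ → K) (hxy : y 0 = ω * x 0) :
    partitionFunction ω (n + 1) x y =
      (ω - 1) * x 0 * (∏ j ∈ range n, (ω * y (j + 1) - x 0)) *
        (∏ i ∈ range n, (ω * y 0 - x (i + 1))) *
        partitionFunction ω n (fun i => x (i + 1)) (fun i => y (i + 1)) := by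
  unfold partitionFunction
  rw [List.range_succ_eq_map, List.map_cons, List.map_cons, List.prod_cons, Matrix.mul_apply,
    sum_fun_succ_bool, Fintype.sum_bool, const_eq_cons, const_eq_cons]
  simp only [transfer_cons_false_true, transfer_cons_false_false, hxy, sub_self, zero_mul,
    Finset.sum_const_zero, add_zero, prod_transfer_cons_true, rowWeight_true_true_false, mul_ite,
    mul_zero, ite_mul, Finset.sum_ite_eq', Finset.mem_univ, if_true]
  simp only [List.map_map, mul_assoc]
  rfl

/-- The functions `K → K` given by polynomials of degree less than `d`. -/
def polyFun (K : Type*) [Field K] (d : ℕ) : Submodule K (K → K) :=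
  (Polynomial.degreeLT K d).map (LinearMap.pi fun a => Polynomial.leval a)

theorem mem_polyFun {d : ℕ} {f : K → K} :
    f ∈ polyFun K d ↔ ∃ P : Polynomial K, P.degree < d ∧ ∀ a, f a = P.eval a := by
  simp only [polyFun, Submodule.mem_map, Polynomial.mem_degreeLT]
  constructor
  · rintro ⟨P, hP, rfl⟩; exact ⟨P, hP, fun a => rfl⟩
  · rintro ⟨P, hP, h⟩; exact ⟨P, hP, funext fun a => (h a).symm⟩

theorem pow_mem_polyFun {d k : ℕ} (h : k < d) : (fun a : K => a ^ k) ∈ polyFun K d :=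
  mem_polyFun.2 ⟨Polynomial.X ^ k, by simpa using h, by simp⟩

theorem linear_mul_mem_polyFun {d : ℕ} {f : K → K} (hf : f ∈ polyFun K d) (b c : K) :
    (fun a => (b * a + c) * f a) ∈ polyFun K (d + 1) := by
  obtain ⟨P, hP, h⟩ := mem_polyFun.1 hf
  refine mem_polyFun.2 ⟨(Polynomial.C b * Polynomial.X + Polynomial.C c) * P, ?_, by simp [h]⟩
  by_cases hP0 : P = 0
  · simp [hP0]
  · have hd : P.natDegree < d := (Polynomial.natDegree_lt_iff_degree_lt hP0).2 hP
    refine lt_of_le_of_lt Polynomial.degree_le_natDegree ?_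
    have := Polynomial.natDegree_mul_le (p := Polynomial.C b * Polynomial.X + Polynomial.C c) (q := P)
    have := Polynomial.natDegree_linear_le (a := b) (b := c)
    exact_mod_cast (by omega)

theorem list_prod_mul_mem_polyFun {d : ℕ} {f : K → K} (hf : f ∈ polyFun K d) (b : K)
    (cs : List K) :
    (fun a => (cs.map fun c => b * a - c).prod * f a) ∈ polyFun K (cs.length + d) := by
  induction cs with
  | nil => simpa using hf
  | cons c cs ih =>
    have := linear_mul_mem_polyFun ih b (-c)
    convert this using 1
    · rw [List.length_cons, add_right_comm]
    · funext a
      rw [List.map_cons, List.prod_cons]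
      ring

theorem eq_of_mem_polyFun {d : ℕ} {f g : K → K} (hf : f ∈ polyFun K d) (hg : g ∈ polyFun K d)
    (S : Finset K) (hS : d ≤ S.card) (h : ∀ a ∈ S, f a = g a) : f = g := by
  obtain ⟨P, hP, hPf⟩ := mem_polyFun.1 hf
  obtain ⟨Q, hQ, hQg⟩ := mem_polyFun.1 hg
  have : P = Q := Polynomial.eq_of_degrees_lt_of_eval_finset_eq S
    (hP.trans_le (by exact_mod_cast hS)) (hQ.trans_le (by exact_mod_cast hS))
    fun a ha => by rw [← hPf, ← hQg, h a ha]
  funext a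
  rw [hPf, hQg, this]

/-- The sequence `a, w 0, w 1, …`. -/
def seqCons (a : K) (w : ℕ → K) : ℕ → K
  | 0 => a
  | i + 1 => w i

theorem prod_transfer_mem_polyFun (ω : K) (n : ℕ) (w : ℕ → K) (xs : List K) (s t : Fin n → Bool) :
    (fun a => (xs.map (transfer ω (n + 1) (seqCons a w))).prod (Fin.cons false s)
      (Fin.cons true t)) ∈ polyFun K xs.length := by
  induction xs generalizing s with
  | nil =>
    convert Submodule.zero_mem _ using 1
    funext a
    simp only [List.map_nil, List.prod_nil, Pi.zero_apply]
    refine Matrix.one_apply_ne fun h => ?_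
    simpa using congrFun h 0
  | cons x xs ih =>
    have hone : (fun _ : K => (1 : K)) ∈ polyFun K 1 := by
      simpa using pow_mem_polyFun (K := K) (zero_lt_one)
    have heq : (fun a => ((x :: xs).map (transfer ω (n + 1) (seqCons a w))).prod (Fin.cons false s)
          (Fin.cons true t)) =
        ∑ u, (((ω - 1) * x * rowWeight ω x n w true true s u *
              (xs.map (transfer ω n w)).prod u t) •
            (fun a => (xs.map fun c => ω * a - c).prod * 1) +
          transfer ω n w x s u • (fun a => (-1 * a + ω * x) *
            (xs.map (transfer ω (n + 1) (seqCons a w))).prod (Fin.cons false u)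
              (Fin.cons true t))) := by
      funext a
      simp only [List.map_cons, List.prod_cons, Matrix.mul_apply, sum_fun_succ_bool,
        Fintype.sum_bool, transfer_cons_false_true, transfer_cons_false_false,
        prod_transfer_cons_true, seqCons, ← Finset.sum_add_distrib, Finset.sum_apply,
        Pi.add_apply, Pi.smul_apply, smul_eq_mul]
      exact Finset.sum_congr rfl fun u _ => by ring
    rw [heq]
    exact Submodule.sum_mem _ fun u _ => Submodule.add_mem _
      (Submodule.smul_mem _ _ (list_prod_mul_mem_polyFun hone ω xs))
      (Submodule.smul_mem _ _ (linear_mul_mem_polyFun (ih u) (-1) (ω * x)))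

theorem partitionFunction_mem_polyFun (ω : K) (n : ℕ) (x w : ℕ → K) :
    (fun a => partitionFunction ω (n + 1) x (seqCons a w)) ∈ polyFun K (n + 1) := by
  have := prod_transfer_mem_polyFun ω n w ((List.range (n + 1)).map x) (fun _ => false)
    (fun _ => true)
  rw [← const_eq_cons, ← const_eq_cons] at this
  simpa only [List.length_map, List.length_range, partitionFunction] using this

theorem mul_mem_polyFun {d e : ℕ} {f g : K → K} (hf : f ∈ polyFun K (d + 1))
    (hg : g ∈ polyFun K e) : (fun a => f a * g a) ∈ polyFun K (d + e) := by
  obtain ⟨P, hP, hPf⟩ := mem_polyFun.1 hf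
  obtain ⟨Q, hQ, hQg⟩ := mem_polyFun.1 hg
  refine mem_polyFun.2 ⟨P * Q, ?_, by simp [hPf, hQg]⟩
  by_cases hP0 : P = 0
  · simp [hP0, WithBot.bot_lt_add]
  by_cases hQ0 : Q = 0
  · simp [hQ0]
  have h1 := (Polynomial.natDegree_lt_iff_degree_lt hP0).2 hP
  have h2 := (Polynomial.natDegree_lt_iff_degree_lt hQ0).2 hQ
  refine lt_of_le_of_lt Polynomial.degree_le_natDegree ?_
  have := Polynomial.natDegree_mul_le (p := P) (q := Q)
  exact_mod_cast (by omega)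

/-- The generalized Vandermonde determinant of `z 0, …, z (m - 1)` with exponents `f`. -/
def powDet (m : ℕ) (f : ℕ → ℕ) (z : ℕ → K) : K :=
  (Matrix.of fun i j : Fin m => z i ^ f j).det

theorem powDet_eq_zero {m : ℕ} (f : ℕ → ℕ) {z : ℕ → K} {i j : ℕ} (hi : i < m) (hj : j < m)
    (hij : i ≠ j) (h : z i = z j) : powDet m f z = 0 :=
  Matrix.det_zero_of_row_eq (i := ⟨i, hi⟩) (j := ⟨j, hj⟩) (by simpa using hij)
    (by funext k; simp [h])

theorem powDet_perm {m : ℕ} (f : ℕ → ℕ) {z z' : ℕ → K} (τ : Equiv.Perm (Fin m))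
    (h : ∀ i, z' (i : Fin m) = z (τ i)) :
    powDet m f z' = ((Equiv.Perm.sign τ : ℤ) : K) * powDet m f z := by
  rw [powDet, powDet, ← Matrix.det_permute]
  congr 1
  ext i j
  simp [h]

theorem powDet_mem_polyFun {m d : ℕ} (f : ℕ → ℕ) (w : ℕ → K) (hf : ∀ j < m + 1, f j < d) :
    (fun a => powDet (m + 1) f (seqCons a w)) ∈ polyFun K d := by
  have heq : (fun a => powDet (m + 1) f (seqCons a w)) =
      ∑ j : Fin (m + 1), ((-1) ^ (j : ℕ) *
        (Matrix.of fun i k : Fin m => w i ^ f (j.succAbove k)).det) • fun a => a ^ f j := by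
    funext a
    simp only [powDet, Matrix.det_succ_row_zero, Finset.sum_apply, Pi.smul_apply, smul_eq_mul]
    refine Finset.sum_congr rfl fun j _ => ?_
    rw [mul_right_comm]
    rfl
  rw [heq]
  exact Submodule.sum_mem _ fun j _ => Submodule.smul_mem _ _ (pow_mem_polyFun (hf j j.2))

theorem powDet_id_succ (m : ℕ) (z : ℕ → K) :
    powDet (m + 1) id z = (∏ i ∈ range m, (z (i + 1) - z 0)) * powDet m id fun i => z (i + 1) := by
  have h : ∀ m (z : ℕ → K), powDet m id z = (Matrix.vandermonde fun i : Fin m => z i).det :=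
    fun _ _ => rfl
  rw [h, h, Matrix.det_vandermonde, Matrix.det_vandermonde, Fin.prod_univ_succ,
    Finset.prod_range fun i => z (i + 1) - z 0]
  simp [Fin.prod_Ioi_succ]

/-- The natural numbers not congruent to `2` modulo `3`, in increasing order. -/
def gapExp (j : ℕ) : ℕ := 3 * (j / 2) + j % 2

theorem gapExp_add_two (j : ℕ) : gapExp (j + 2) = gapExp j + 3 := by
  unfold gapExp; omega

theorem det_eq_mul_det_submatrix {m : ℕ} (N : Matrix (Fin (m + 1)) (Fin (m + 1)) K)
    (h : ∀ j : Fin m, N 0 j.succ = 0) :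
    N.det = N 0 0 * (N.submatrix Fin.succ Fin.succ).det := by
  simp [Matrix.det_succ_row_zero, Fin.sum_univ_succ, h]

theorem powDet_gapExp_add_two (m : ℕ) (z : ℕ → K) (h : z 0 ^ 3 = z 1 ^ 3) :
    powDet (m + 2) gapExp z = (z 1 - z 0) * (∏ i ∈ range m, (z (i + 2) ^ 3 - z 1 ^ 3)) *
      powDet m gapExp fun i => z (i + 2) := by
  set M : Matrix (Fin (m + 2)) (Fin (m + 2)) K := Matrix.of fun i j => z i ^ gapExp j with hM
  set U : Matrix (Fin (m + 2)) (Fin (m + 2)) K := Matrix.of fun k j =>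
    if k = j then 1 else if (k : ℕ) + 2 = j then - z 1 ^ 3 else
      if (k : ℕ) = 0 ∧ (j : ℕ) = 1 then - z 0 else 0 with hU
  have hUdet : U.det = 1 := by
    rw [Matrix.det_of_isUpperTriangular]
    · simp [hU]
    · intro i j hij
      have : (j : ℕ) < i := hij
      simp only [hU, Matrix.of_apply]
      rw [if_neg (by omega), if_neg (by omega), if_neg (by omega)]
  have hcol0 : ∀ i, (M * U) i 0 = 1 := by
    intro i
    rw [Matrix.mul_apply, Finset.sum_eq_single 0]
    · simp [hM, hU, gapExp]
    · intro k _ hk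
      simp [hU, hk]
    · simp
  have hcol1 : ∀ i, (M * U) i 1 = z i - z 0 := by
    intro i
    rw [Matrix.mul_apply, Finset.sum_eq_add (1 : Fin (m + 2)) 0 (by simp)]
    · simp [hM, hU, gapExp, sub_eq_add_neg]
    · rintro k _ ⟨hk1, hk0⟩
      simp [hU, hk1, hk0]
    · simp
    · simp
  have hcol2 : ∀ i (j : Fin m),
      (M * U) i j.succ.succ = (z i ^ 3 - z 1 ^ 3) * z i ^ gapExp j := by
    intro i j
    rw [Matrix.mul_apply, Finset.sum_eq_add j.succ.succ (j.castSucc.castSucc)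
      (by simp only [ne_eq, Fin.ext_iff, Fin.val_succ, Fin.val_castSucc]; omega)]
    · simp only [hM, hU, Matrix.of_apply, if_true, Fin.val_succ, Fin.val_castSucc, gapExp_add_two]
      rw [if_neg (by simp only [Fin.ext_iff, Fin.val_succ, Fin.val_castSucc]; omega)]
      ring
    · rintro k _ ⟨hk1, hk0⟩
      rw [ne_eq, Fin.ext_iff] at hk1 hk0
      simp only [Fin.val_succ, Fin.val_castSucc] at hk1 hk0
      have hkj : U k j.succ.succ = 0 := by
        simp only [hU, Matrix.of_apply, Fin.ext_iff, Fin.val_succ]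
        rw [if_neg (by omega), if_neg (by omega), if_neg (by omega)]
      rw [hkj, mul_zero]
    · simp
    · simp
  have hdet : powDet (m + 2) gapExp z = (M * U).det := by
    rw [Matrix.det_mul, hUdet, mul_one]
    rfl
  rw [hdet, det_eq_mul_det_submatrix, hcol0, one_mul, det_eq_mul_det_submatrix,
    Matrix.submatrix_submatrix, Matrix.submatrix_apply, Fin.succ_zero_eq_one, hcol1, mul_assoc,
    Finset.prod_range fun i => z (i + 2) ^ 3 - z 1 ^ 3, powDet, ← Matrix.det_mul_column]
  · congr 2
    ext i j
    exact hcol2 _ _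
  · intro j
    rw [Matrix.submatrix_apply, hcol2]
    simp
  · intro j
    cases j using Fin.cases with
    | zero => rw [Fin.succ_zero_eq_one, hcol1]; simp
    | succ j => rw [hcol2]; simp [h]

theorem prod_range_two_mul {M : Type*} [CommMonoid M] (f : ℕ → M) (n : ℕ) :
    ∏ k ∈ range (2 * n), f k = ∏ i ∈ range n, f (2 * i) * f (2 * i + 1) := by
  induction n with
  | zero => simp
  | succ n ih => rw [Nat.mul_succ, prod_range_succ, prod_range_succ, ih, prod_range_succ, mul_assoc]

/-- The partition function agrees, up to a factor, with a quotient of alternants; here `z`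
interlaces the column parameters with the row parameters. -/
def IsAlternantQuotient (ω : K) (n : ℕ) (z : ℕ → K) : Prop :=
  partitionFunction ω n (fun i => z (2 * i + 1)) (fun i => z (2 * i)) * powDet (2 * n) id z =
    (∏ i ∈ range n, (ω - 1) * (-ω) ^ i) * (∏ i ∈ range n, z (2 * i + 1)) *
      powDet (2 * n) gapExp z

theorem IsAlternantQuotient.succ {ω : K} (hω : ω ^ 2 + ω + 1 = 0) {n : ℕ} {z : ℕ → K}
    (hz : z 0 = ω * z 1) (h : IsAlternantQuotient ω n fun i => z (i + 2)) :
    IsAlternantQuotient ω (n + 1) z := by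
  have h3 : ω ^ 3 = 1 := by linear_combination (ω - 1) * hω
  have hZ : (∏ j ∈ range n, (ω * z (2 * j + 2) - z 1)) *
      (∏ i ∈ range n, (ω * z 0 - z (2 * i + 3))) =
      (-ω) ^ n * ∏ k ∈ range (2 * n), (z (k + 2) - ω ^ 2 * z 1) := by
    rw [prod_range_two_mul, ← Finset.prod_mul_distrib, Finset.pow_eq_prod_const,
      ← Finset.prod_mul_distrib]
    refine Finset.prod_congr rfl fun j _ => ?_
    rw [hz]
    linear_combination (-z 1 * z (2 * j + 3) + ω ^ 2 * z 1 ^ 2 ) * h3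
  have hD : ∏ k ∈ range (2 * n), (z (k + 2) ^ 3 - z 1 ^ 3) =
      (∏ k ∈ range (2 * n), (z (k + 2) - ω ^ 2 * z 1)) *
        ((∏ k ∈ range (2 * n), (z (k + 2) - z 0)) * ∏ k ∈ range (2 * n), (z (k + 2) - z 1)) := by
    rw [← Finset.prod_mul_distrib, ← Finset.prod_mul_distrib]
    refine Finset.prod_congr rfl fun k _ => ?_
    rw [hz]
    linear_combination (z (k + 2) ^ 2 * z 1 - z (k + 2) * z 1 ^ 2 * ω) * hω +
      z 1 ^ 3 * h3
  unfold IsAlternantQuotient at h ⊢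
  rw [partitionFunction_succ_of_eq ω n _ _ hz, Nat.mul_succ, powDet_gapExp_add_two _ _ (by
    rw [hz, mul_pow, h3, one_mul]), hD, powDet_id_succ, powDet_id_succ, prod_range_succ',
    prod_range_succ, prod_range_succ' (fun i => z (2 * i + 1))]
  simp only [mul_add, mul_one, mul_zero, zero_add, add_assoc, Nat.reduceAdd] at h ⊢
  generalize hP₀ : ∏ x ∈ range (2 * n), (z (x + 2) - z 0) = P₀
  generalize hP₁ : ∏ x ∈ range (2 * n), (z (x + 2) - z 1) = P₁
  generalize hP₂ : ∏ x ∈ range (2 * n), (z (x + 2) - ω ^ 2 * z 1) = P₂ at hZ ⊢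
  linear_combination (ω - 1) * z 1 * P₀ * (z 1 - z 0) * P₁ *
      partitionFunction ω n (fun i => z (2 * i + 3)) (fun i => z (2 * i + 2)) *
      powDet (2 * n) id (fun i => z (i + 2)) * hZ +
    (ω - 1) * z 1 * (-ω) ^ n * P₂ * P₀ * (z 1 - z 0) * P₁ * h

theorem swap_one_two_mul_add_one (i j : ℕ) :
    Equiv.swap 1 (2 * i + 1) (2 * j + 1) = 2 * Equiv.swap 0 i j + 1 := by
  simp only [Equiv.swap_apply_def]
  split_ifs <;> omega

theorem swap_one_two_mul (i j : ℕ) : Equiv.swap 1 (2 * i + 1) (2 * j) = 2 * j :=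
  Equiv.swap_apply_of_ne_of_ne (by omega) (by omega)

theorem IsAlternantQuotient.of_swap {ω : K} (hω : ω ^ 2 + ω + 1 = 0) (h3 : (3 : K) ≠ 0) {n i : ℕ}
    (hi : i < n) {z : ℕ → K} (h : IsAlternantQuotient ω n (z ∘ Equiv.swap 1 (2 * i + 1))) :
    IsAlternantQuotient ω n z := by
  set σ := Equiv.swap 0 i with hσdef
  have hσ : ∀ j, σ j < n ↔ j < n := by
    intro j
    rw [hσdef, Equiv.swap_apply_def]
    split_ifs <;> omega
  set τ : Equiv.Perm (Fin (2 * n)) := Equiv.swap ⟨1, by omega⟩ ⟨2 * i + 1, by omega⟩ with hτdef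
  have hτ : ∀ j : Fin (2 * n), (z ∘ Equiv.swap 1 (2 * i + 1)) j = z (τ j) := by
    intro j
    simp only [Function.comp_apply, hτdef, Equiv.swap_apply_def, Fin.ext_iff]
    congr 1
    split_ifs <;> rfl
  have hprod : ∏ j ∈ range n, z (2 * σ j + 1) = ∏ j ∈ range n, z (2 * j + 1) := by
    refine Finset.prod_bij (fun j _ => σ j) ?_ ?_ ?_ ?_
    · intro j hj; simpa [hσ] using hj
    · intro a _ b _ hab; exact σ.injective hab
    · intro b hb
      exact ⟨σ.symm b, by simpa [← hσ (σ.symm b)] using hb, by simp⟩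
    · intro j _; rfl
  have hsign : ((Equiv.Perm.sign τ : ℤ) : K) ≠ 0 := by
    rcases Int.units_eq_one_or (Equiv.Perm.sign τ) with hs | hs <;> simp [hs]
  unfold IsAlternantQuotient at h ⊢
  rw [powDet_perm id τ hτ, powDet_perm gapExp τ hτ] at h
  simp only [Function.comp_apply, swap_one_two_mul_add_one, swap_one_two_mul, ← hσdef, hprod] at h
  have hZ := partitionFunction_comp_perm hω h3 n (fun j => z (2 * j + 1)) (fun j => z (2 * j)) σ hσ
  rw [Function.comp_def] at hZ
  rw [hZ] at h
  refine mul_left_cancel₀ hsign ?_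
  linear_combination h

theorem isAlternantQuotient {ω : K} (hω : ω ^ 2 + ω + 1 = 0) (h3 : (3 : K) ≠ 0) (n : ℕ) (z : ℕ → K)
    (hinj : Function.Injective z) (hne : ∀ j k, ω * z j ≠ z k) : IsAlternantQuotient ω n z := by
  classical
  induction n generalizing z with
  | zero =>
    simp only [IsAlternantQuotient, partitionFunction, powDet, List.range_zero, List.map_nil,
      List.prod_nil, Finset.range_zero, Finset.prod_empty, Nat.mul_zero, Matrix.det_isEmpty, mul_one]
    rw [Subsingleton.elim (fun _ : Fin 0 => false) fun _ => true, Matrix.one_apply_eq]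
  | succ n ih =>
    set w : ℕ → K := fun i => z (i + 1) with hw
    have hwinj : Function.Injective w := fun i j hij => by simpa using hinj hij
    have hwne : ∀ j k, ω * w j ≠ w k := fun j k => hne _ _
    have hω0 : ω ≠ 0 := by rintro rfl; simp at hω
    have hcol : ∀ a, (fun i => seqCons a w (2 * i)) = seqCons a fun i => w (2 * i + 1) := by
      intro a
      funext i
      cases i <;> rfl
    have hF : (fun a => partitionFunction ω (n + 1) (fun i => w (2 * i))
        (seqCons a fun i => w (2 * i + 1)) * powDet (2 * n + 2) id (seqCons a w)) ∈
        polyFun K (n + (2 * n + 2)) :=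
      mul_mem_polyFun (partitionFunction_mem_polyFun ω n _ _)
        (powDet_mem_polyFun id w fun j hj => hj)
    have hG : ((∏ i ∈ range (n + 1), (ω - 1) * (-ω) ^ i) * ∏ i ∈ range (n + 1), w (2 * i)) •
        (fun a => powDet (2 * n + 2) gapExp (seqCons a w)) ∈ polyFun K (n + (2 * n + 2)) :=
      Submodule.smul_mem _ _ (powDet_mem_polyFun gapExp w fun j hj => by unfold gapExp; omega)
    set S : Finset K := (range (2 * n + 1)).image w ∪
      (range (n + 1)).image fun i => ω * w (2 * i) with hS
    have hcard : n + (2 * n + 2) ≤ S.card := by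
      rw [hS, Finset.card_union_of_disjoint, Finset.card_image_of_injective _ hwinj,
        Finset.card_image_of_injective, card_range, card_range]
      · omega
      · intro i j hij
        have := hwinj (mul_left_cancel₀ hω0 hij)
        omega
      · rw [Finset.disjoint_left]
        intro a ha hb
        obtain ⟨i, -, rfl⟩ := Finset.mem_image.1 ha
        obtain ⟨j, -, hj⟩ := Finset.mem_image.1 hb
        exact hwne _ _ hj
    have heq := eq_of_mem_polyFun hF hG S hcard (by
      intro a ha
      rcases Finset.mem_union.1 ha with ha | ha
      · obtain ⟨k, hk, rfl⟩ := Finset.mem_image.1 ha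
        have hk := Finset.mem_range.1 hk
        have hzero : ∀ f, powDet (2 * n + 2) f (seqCons (w k) w) = 0 := fun f =>
          powDet_eq_zero f (i := 0) (j := k + 1) (by omega) (by omega) (by omega) rfl
        simp [hzero]
      · obtain ⟨i, hi, rfl⟩ := Finset.mem_image.1 ha
        have hi := Finset.mem_range.1 hi
        have hq : IsAlternantQuotient ω (n + 1) (seqCons (ω * w (2 * i)) w) := by
          refine IsAlternantQuotient.of_swap hω h3 hi (IsAlternantQuotient.succ hω ?_ ?_)
          · have h0 : Equiv.swap 1 (2 * i + 1) 0 = 0 := swap_one_two_mul i 0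
            rw [Function.comp_apply, Function.comp_apply, Equiv.swap_apply_left, h0]
            rfl
          · have hpos : ∀ k, Equiv.swap 1 (2 * i + 1) (k + 2) ≠ 0 := by
              intro k
              rw [Equiv.swap_apply_def]
              split_ifs <;> omega
            have hsub : (fun k => (seqCons (ω * w (2 * i)) w ∘ Equiv.swap 1 (2 * i + 1)) (k + 2)) =
                fun k => w (Equiv.swap 1 (2 * i + 1) (k + 2) - 1) := by
              funext k
              obtain ⟨l, hl⟩ := Nat.exists_eq_succ_of_ne_zero (hpos k)
              rw [Function.comp_apply, hl]
              rfl
            rw [hsub]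
            refine ih _ (fun k l hkl => ?_) fun k l => hwne _ _
            have h1 := hwinj hkl
            have h2 := (Equiv.swap 1 (2 * i + 1)).injective (a₁ := k + 2) (a₂ := l + 2) (by
              have := hpos k
              have := hpos l
              omega)
            omega
        unfold IsAlternantQuotient at hq
        rw [hcol] at hq
        exact hq)
    have h0 := congrFun heq (z 0)
    have hz : seqCons (z 0) w = z := by
      funext i
      cases i <;> rfl
    unfold IsAlternantQuotient
    have hcol0 := hcol (z 0)
    rw [hz] at hcol0
    rw [hcol0]
    simp only [hz, Pi.smul_apply, smul_eq_mul] at h0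
    exact h0

end SixVertex

/-- The product of the differences `f j - f i` over all `i < j < m`. -/
def diffProd {R : Type*} [CommRing R] (m : ℕ) (f : ℕ → R) : R :=
  ∏ j ∈ range m, ∏ i ∈ range j, (f j - f i)

theorem diffProd_succ {R : Type*} [CommRing R] (m : ℕ) (f : ℕ → R) :
    diffProd (m + 1) f = diffProd m f * ∏ i ∈ range m, (f m - f i) :=
  prod_range_succ _ _

theorem prod_sub_eq_factorial (n : ℕ) : ∏ i ∈ range n, ((n : ℚ) - i) = n.factorial := by
  induction n with
  | zero => simp
  | succ n ih =>
    rw [prod_range_succ', Nat.factorial_succ, Nat.cast_mul, ← ih, mul_comm]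
    push_cast
    simp

theorem prod_gapExp_differences (n : ℕ) :
    ∏ i ∈ range n, ((3 * n - 3 * i : ℚ) * (3 * n - (3 * i + 1))) *
        ((3 * n + 1 - 3 * i) * (3 * n + 1 - (3 * i + 1))) =
      3 ^ n * n.factorial * (3 * n + 1).factorial := by
  induction n with
  | zero => simp
  | succ n ih =>
    have h : (3 * (n + 1) + 1).factorial =
        (3 * n + 4) * ((3 * n + 3) * ((3 * n + 2) * (3 * n + 1).factorial)) := rfl
    rw [prod_range_succ', h, Nat.factorial_succ]
    have hshift : ∀ i ∈ range n, ((3 * (n + 1 : ℕ) - 3 * (i + 1 : ℕ) : ℚ) *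
          (3 * (n + 1 : ℕ) - (3 * (i + 1 : ℕ) + 1))) *
        ((3 * (n + 1 : ℕ) + 1 - 3 * (i + 1 : ℕ)) *
          (3 * (n + 1 : ℕ) + 1 - (3 * (i + 1 : ℕ) + 1))) =
        ((3 * n - 3 * i : ℚ) * (3 * n - (3 * i + 1))) *
        ((3 * n + 1 - 3 * i) * (3 * n + 1 - (3 * i + 1))) := by
      intro i _
      push_cast
      ring
    rw [prod_congr rfl hshift, ih]
    push_cast
    ring

theorem prod_factorial_succ (n : ℕ) :
    (∏ i ∈ range (n + 1), ((n + 1 + i).factorial : ℚ)) * n.factorial =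
      (∏ i ∈ range n, ((n + i).factorial : ℚ)) * (2 * n).factorial * (2 * n + 1).factorial := by
  have h := prod_range_succ' (fun i => ((n + i).factorial : ℚ)) (n + 1)
  rw [prod_range_succ, prod_range_succ] at h
  rw [two_mul]
  simp only [add_zero] at h
  rw [← add_assoc] at h
  rw [h]
  congr 1
  exact prod_congr rfl fun i _ => by rw [add_right_comm, add_assoc]

theorem diffProd_gapExp (n : ℕ) :
    diffProd (2 * n) (fun j => (gapExp j : ℚ)) =
      (∏ i ∈ range n, ((3 * i + 1).factorial : ℚ) / ((n + i).factorial : ℚ)) *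
        (∏ i ∈ range n, 3 ^ i) * diffProd (2 * n) fun j => (j : ℚ) := by
  induction n with
  | zero => simp [diffProd]
  | succ n ih =>
    have hg0 : ∀ i, gapExp (2 * i) = 3 * i := by intro i; unfold gapExp; omega
    have hg1 : ∀ i, gapExp (2 * i + 1) = 3 * i + 1 := by intro i; unfold gapExp; omega
    have hid0 := prod_sub_eq_factorial (2 * n)
    have hid1 := prod_sub_eq_factorial (2 * n + 1)
    have hgap := prod_gapExp_differences n
    have hf := prod_factorial_succ n
    rw [prod_mul_distrib] at hgap
    rw [Nat.mul_succ, diffProd_succ, diffProd_succ, diffProd_succ, diffProd_succ, hid0, hid1, ih,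
      prod_range_succ (fun i => (gapExp (2 * n + 1) : ℚ) - gapExp i), prod_range_two_mul,
      prod_range_two_mul]
    simp only [hg0, hg1, prod_div_distrib]
    push_cast at hgap ⊢
    rw [prod_range_succ (fun i => ((3 * i + 1).factorial : ℚ)), prod_range_succ (fun i => (3 : ℚ) ^ i)]
    have hB : ∀ k m, (∏ i ∈ range k, ((m + i).factorial : ℚ)) ≠ 0 := fun k m =>
      prod_ne_zero_iff.2 fun i _ => by positivity
    have hn : (n.factorial : ℚ) ≠ 0 := by positivity
    have h1 := hB n n
    have h2 := hB (n + 1) (n + 1)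
    have h3n : (3 * (n : ℚ) + 1 - 3 * n) = 1 := by ring
    rw [h3n, mul_one]
    generalize (∏ i ∈ range n, ((n + i).factorial : ℚ)) = B at *
    generalize (∏ i ∈ range (n + 1), ((n + 1 + i).factorial : ℚ)) = B' at *
    generalize (∏ i ∈ range n, (3 * (n : ℚ) - 3 * i) * (3 * n - (3 * i + 1))) = G₀ at *
    generalize (∏ i ∈ range n, (3 * (n : ℚ) + 1 - 3 * i) * (3 * n + 1 - (3 * i + 1))) = G₁ at *
    generalize diffProd (2 * n) (fun j => (j : ℚ)) = d
    field_simp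
    linear_combination d * B' * hgap + d * 3 ^ n * ((3 * n + 1).factorial : ℚ) * hf

theorem det_vandermonde_eq_diffProd {R : Type*} [CommRing R] (m : ℕ) (f : ℕ → R) :
    (Matrix.vandermonde fun i : Fin m => f i).det = diffProd m f := by
  rw [Matrix.det_vandermonde, diffProd, prod_range fun j => ∏ i ∈ range j, (f j - f i),
    Finset.prod_comm' (t' := univ) (s' := fun j => Iio j) (by simp)]
  refine prod_congr rfl fun j _ => ?_
  rw [← Nat.Iio_eq_range, ← Fin.map_valEmbedding_Iio, prod_map]
  rfl

theorem powDet_geometric {K : Type*} [Field K] (m : ℕ) (f : ℕ → ℕ) (t : K) :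
    powDet m f (fun i => t ^ i) = diffProd m fun j => t ^ f j := by
  rw [← det_vandermonde_eq_diffProd, ← Matrix.det_transpose, powDet]
  congr 1
  ext i j
  simp [Matrix.vandermonde_apply, ← pow_mul, mul_comm]

theorem diffProd_pow {R : Type*} [CommRing R] (m : ℕ) (f : ℕ → ℕ) (t : R) :
    (diffProd m fun j => t ^ f j) =
      (∏ j ∈ range m, ∏ _i ∈ range j, (t - 1)) *
        diffProd m fun j => ∑ k ∈ range (f j), t ^ k := by
  simp only [diffProd, ← prod_mul_distrib]
  refine prod_congr rfl fun j _ => prod_congr rfl fun i _ => ?_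
  have h1 := mul_geom_sum t (f j)
  have h2 := mul_geom_sum t (f i)
  linear_combination h2 - h1

theorem continuous_diffProd {X R : Type*} [TopologicalSpace X] [TopologicalSpace R] [CommRing R]
    [IsTopologicalRing R] (m : ℕ) {f : ℕ → X → R} (hf : ∀ j, Continuous (f j)) :
    Continuous fun t => diffProd m fun j => f j t :=
  continuous_finsetProd _ fun _ _ => continuous_finsetProd _ fun _ _ => (hf _).sub (hf _)

theorem continuous_rowWeight (ω : ℂ) (n : ℕ) {x : ℝ → ℂ} {y : ℕ → ℝ → ℂ} (hx : Continuous x)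
    (hy : ∀ i, Continuous (y i)) (h k : Bool) (s t : Fin n → Bool) :
    Continuous fun a => rowWeight ω (x a) n (fun i => y i a) h k s t := by
  induction n generalizing y h with
  | zero => exact continuous_const
  | succ n ih =>
    refine continuous_finsetSum _ fun g _ => Continuous.mul ?_ (ih (fun i => hy (i + 1)) _ _ _)
    have hy0 := hy 0
    cases h <;> cases s 0 <;> cases g <;> cases t 0 <;> simp only [vertexWeight] <;> fun_prop

theorem continuous_partitionFunction (ω : ℂ) (n : ℕ) {x y : ℕ → ℝ → ℂ}
    (hx : ∀ i, Continuous (x i)) (hy : ∀ i, Continuous (y i)) :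
    Continuous fun a => partitionFunction ω n (fun i => x i a) (fun i => y i a) := by
  unfold partitionFunction
  simp only [List.map_map]
  refine (continuous_list_prod (f := fun i a => transfer ω n (fun i => y i a) (x i a))
    (List.range n) fun i _ => ?_).matrix_elem _ _
  exact continuous_matrix fun s t => continuous_rowWeight ω n (hx i) hy _ _ _ _

theorem partitionFunction_one {ω : ℂ} (hω : ω ^ 2 + ω + 1 = 0) (n : ℕ) :
    partitionFunction ω n (fun _ => 1) (fun _ => 1) * diffProd (2 * n) (fun j => (j : ℂ)) =
      (∏ i ∈ range n, (ω - 1) * (-ω) ^ i) * diffProd (2 * n) fun j => (gapExp j : ℂ) := by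
  have hnr : ∀ r : ℝ, ω ≠ r := by
    rintro r rfl
    norm_cast at hω
    nlinarith [sq_nonneg (2 * r + 1)]
  set F : ℝ → ℂ := fun t =>
    partitionFunction ω n (fun i => (t : ℂ) ^ (2 * i + 1)) (fun i => (t : ℂ) ^ (2 * i)) *
      diffProd (2 * n) fun j => ∑ k ∈ range (id j), (t : ℂ) ^ k with hF
  set G : ℝ → ℂ := fun t => (∏ i ∈ range n, (ω - 1) * (-ω) ^ i) *
    (∏ i ∈ range n, (t : ℂ) ^ (2 * i + 1)) *
      diffProd (2 * n) fun j => ∑ k ∈ range (gapExp j), (t : ℂ) ^ k with hG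
  have hFc : Continuous F :=
    (continuous_partitionFunction ω n (x := fun i (t : ℝ) => (t : ℂ) ^ (2 * i + 1))
      (y := fun i (t : ℝ) => (t : ℂ) ^ (2 * i)) (by fun_prop) (by fun_prop)).mul
      (continuous_diffProd _ (by fun_prop))
  have hGc : Continuous G :=
    (continuous_const.mul (by fun_prop)).mul (continuous_diffProd _ (by fun_prop))
  have hFG : Set.EqOn F G (Set.Ioi 1) := by
    intro t (ht : 1 < t)
    have hq := isAlternantQuotient hω (by norm_num) n (fun i => (t : ℂ) ^ i)
      (fun i j hij => by
        have hij : (t : ℂ) ^ i = (t : ℂ) ^ j := hij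
        exact pow_right_injective₀ (by linarith) ht.ne' (by exact_mod_cast hij))
      (fun j k hjk => by
        have htj : (t : ℂ) ^ j ≠ 0 := pow_ne_zero _ (by exact_mod_cast (by linarith : t ≠ 0))
        refine hnr (t ^ k / t ^ j) ?_
        push_cast
        rw [eq_div_iff htj, hjk])
    unfold IsAlternantQuotient at hq
    rw [powDet_geometric, powDet_geometric, diffProd_pow, diffProd_pow _ gapExp] at hq
    have h1 : (∏ j ∈ range (2 * n), ∏ _i ∈ range j, ((t : ℂ) - 1)) ≠ 0 :=
      prod_ne_zero_iff.2 fun j _ => prod_ne_zero_iff.2 fun i _ => by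
        rw [sub_ne_zero]
        exact_mod_cast ht.ne'
    refine mul_left_cancel₀ h1 ?_
    simp only [hF, hG]
    linear_combination hq
  have h1 : F 1 = G 1 := by
    have := hFG.closure hFc hGc
    rw [closure_Ioi] at this
    exact this (Set.mem_Ici.2 le_rfl)
  simpa [hF, hG] using h1

/-- Partial sums of `r`, started at `b`, stay in `{0, 1}` and end at `c`. -/
def IsBinaryWalk : (n : ℕ) → Bool → Bool → (Fin n → ℤ) → Prop
  | 0, b, c, _ => b = c
  | n + 1, b, c, r => ∃ d : Bool, (d.toNat : ℤ) = b.toNat + r 0 ∧ IsBinaryWalk n d c (Fin.tail r)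

theorem sum_Iic_succ_fin {n : ℕ} (r : Fin (n + 1) → ℤ) (j : Fin n) :
    ∑ i ∈ Iic j.succ, r i = r 0 + ∑ i ∈ Iic j, Fin.tail r i := by
  have h : ∀ (m : ℕ) (f : Fin m → ℤ) (k : Fin m),
      ∑ i ∈ Iic k, f i = ∑ i, if i ≤ k then f i else 0 := by
    intro m f k
    rw [← sum_filter]
    congr 1
    ext i
    simp
  rw [h, h, Fin.sum_univ_succ]
  simp [Fin.tail]

theorem isBinaryWalk_iff {n : ℕ} (b c : Bool) (r : Fin n → ℤ) :
    IsBinaryWalk n b c r ↔ b.toNat + ∑ i, r i = c.toNat ∧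
      ∀ j, (b.toNat + ∑ i ∈ Iic j, r i = 0 ∨ b.toNat + ∑ i ∈ Iic j, r i = 1) := by
  induction n generalizing b with
  | zero => cases b <;> cases c <;> simp [IsBinaryWalk]
  | succ n ih =>
    have h0 : ∑ i ∈ Iic (0 : Fin (n + 1)), r i = r 0 := by
      rw [show Iic (0 : Fin (n + 1)) = {0} from Finset.Iic_bot, sum_singleton]
    rw [IsBinaryWalk, Fin.sum_univ_succ, Fin.forall_fin_succ, h0]
    simp only [sum_Iic_succ_fin, ih]
    constructor
    · rintro ⟨d, hd, hsum, hpart⟩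
      refine ⟨?_, ?_, fun j => ?_⟩
      · rw [← add_assoc, ← hd]; exact hsum
      · rw [← hd]; cases d <;> simp
      · rw [← add_assoc, ← hd]; exact hpart j
    · rintro ⟨hsum, h01, hpart⟩
      obtain ⟨d, hd⟩ : ∃ d : Bool, (d.toNat : ℤ) = b.toNat + r 0 := by
        rcases h01 with h | h
        · exact ⟨false, by simp [h]⟩
        · exact ⟨true, by simp [h]⟩
      refine ⟨d, hd, ?_, fun j => ?_⟩
      · rw [hd, add_assoc]; exact hsum
      · rw [hd, add_assoc]; exact hpart j

theorem IsBinaryWalk.step {n : ℕ} {b c : Bool} {r : Fin n → ℤ} (h : IsBinaryWalk n b c r)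
    (j : Fin n) : r j = -1 ∨ r j = 0 ∨ r j = 1 := by
  induction n generalizing b with
  | zero => exact j.elim0
  | succ n ih =>
    obtain ⟨d, hd, h⟩ := h
    cases j using Fin.cases with
    | zero => cases b <;> cases d <;> simp at hd <;> omega
    | succ j => exact ih h j

theorem isASM_iff {n : ℕ} (A : Matrix (Fin n) (Fin n) ℤ) :
    IsASM A ↔ (∀ i, IsBinaryWalk n false true (A i)) ∧
      ∀ j, IsBinaryWalk n false true fun i => A i j := by
  constructor
  · rintro ⟨-, hrow, hcol, hrow', hcol'⟩
    simp only [isBinaryWalk_iff]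
    exact ⟨fun i => ⟨by simpa using hrow i, by simpa using hrow' i⟩,
      fun j => ⟨by simpa using hcol j, by simpa using fun i => hcol' i j⟩⟩
  · rintro ⟨hrow, hcol⟩
    refine ⟨fun i j => (hrow i).step j, ?_, ?_, ?_, ?_⟩
    · intro i; simpa using ((isBinaryWalk_iff _ _ _).1 (hrow i)).1
    · intro j; simpa using ((isBinaryWalk_iff _ _ _).1 (hcol j)).1
    · intro i j; simpa using ((isBinaryWalk_iff _ _ _).1 (hrow i)).2 j
    · intro i j; simpa using ((isBinaryWalk_iff _ _ _).1 (hcol j)).2 i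

theorem mem_asmFinset {n : ℕ} (A : Matrix (Fin n) (Fin n) ℤ) : A ∈ asmFinset n ↔ IsASM A := by
  simp only [asmFinset, mem_filter, and_iff_right_iff_imp]
  intro hA
  rw [mem_image]
  have h : ∀ i j, ∃ b : Fin 3, ((b : ℕ) : ℤ) - 1 = A i j := by
    intro i j
    rcases hA.1 i j with h | h | h
    · exact ⟨0, by simp [h]⟩
    · exact ⟨1, by simp [h]⟩
    · exact ⟨2, by simp [h]⟩
  choose B hB using h
  exact ⟨B, mem_univ _, Matrix.ext hB⟩

/-- The row of differences of two states. -/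
def stateDiff {n : ℕ} (s t : Fin n → Bool) (j : Fin n) : ℤ := (t j).toNat - (s j).toNat

open scoped Classical in
/-- The `m × n` arrays whose rows are binary walks from `0` to `1` and whose columns are binary
walks from `s` to `t`. -/
def walkArrays (n : ℕ) : (m : ℕ) → (Fin n → Bool) → (Fin n → Bool) → Finset (Fin m → Fin n → ℤ)
  | 0, s, t => if s = t then {fun i => i.elim0} else ∅
  | m + 1, s, t => (univ.filter fun u => IsBinaryWalk n false true (stateDiff s u)).biUnion
      fun u => (walkArrays n m u t).image (Fin.cons (stateDiff s u))

theorem mem_walkArrays {n m : ℕ} (s t : Fin n → Bool) (A : Fin m → Fin n → ℤ) :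
    A ∈ walkArrays n m s t ↔ (∀ i, IsBinaryWalk n false true (A i)) ∧
      ∀ j, IsBinaryWalk m (s j) (t j) fun i => A i j := by
  induction m generalizing s with
  | zero =>
    rw [walkArrays]
    simp only [IsBinaryWalk, IsEmpty.forall_iff, true_and, ← funext_iff]
    split_ifs with h <;> simp [h, Subsingleton.elim A fun i => i.elim0]
  | succ m ih =>
    simp only [walkArrays, mem_biUnion, mem_filter, mem_univ, true_and, mem_image, ih,
      IsBinaryWalk, Fin.forall_fin_succ (P := fun i => IsBinaryWalk n false true (A i))]
    constructor
    · rintro ⟨u, hu, A', ⟨hrow, hcol⟩, rfl⟩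
      exact ⟨⟨hu, hrow⟩, fun j => ⟨u j, by simp [stateDiff], hcol j⟩⟩
    · rintro ⟨⟨h0, hrow⟩, hcol⟩
      choose u hu hcol using hcol
      have hdiff : stateDiff s u = A 0 := by
        funext j
        simp [stateDiff, hu]
      exact ⟨u, by rwa [hdiff], Fin.tail A, ⟨hrow, hcol⟩, by rw [hdiff, Fin.cons_self_tail]⟩

theorem stateDiff_injective {n : ℕ} (s : Fin n → Bool) : Function.Injective (stateDiff s) := by
  intro u v h
  funext j
  have hj := congrFun h j
  simp only [stateDiff] at hj
  cases hu : u j <;> cases hv : v j <;> simp [hu, hv] at hj ⊢ <;> omega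

open scoped Classical in
theorem card_walkArrays_succ (n m : ℕ) (s t : Fin n → Bool) :
    (walkArrays n (m + 1) s t).card =
      ∑ u, if IsBinaryWalk n false true (stateDiff s u) then (walkArrays n m u t).card else 0 := by
  rw [walkArrays, card_biUnion, sum_filter]
  · refine sum_congr rfl fun u _ => ?_
    rw [card_image_of_injective _ (Fin.cons_right_injective _)]
  · intro u _ v _ huv
    rw [Function.onFun, disjoint_left]
    intro A hA hA'
    obtain ⟨B, -, rfl⟩ := mem_image.1 hA
    obtain ⟨B', -, h⟩ := mem_image.1 hA'
    refine huv (stateDiff_injective s ?_)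
    simpa using (congrFun h 0).symm

section SixVertex

variable {K : Type*} [Field K]

theorem vertexWeight_one (ω : K) (h v g v' : Bool) :
    vertexWeight ω 1 1 h v g v' =
      if (g.toNat : ℤ) = h.toNat + (v'.toNat - v.toNat) then ω - 1 else 0 := by
  cases h <;> cases v <;> cases g <;> cases v' <;> simp [vertexWeight]

open scoped Classical in
theorem rowWeight_one (ω : K) (n : ℕ) (h k : Bool) (s t : Fin n → Bool) :
    rowWeight ω 1 n (fun _ => 1) h k s t =
      if IsBinaryWalk n h k (stateDiff s t) then (ω - 1) ^ n else 0 := by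
  induction n generalizing h with
  | zero => simp [rowWeight, IsBinaryWalk]
  | succ n ih =>
    have htail : Fin.tail (stateDiff s t) = stateDiff (Fin.tail s) (Fin.tail t) := rfl
    simp only [rowWeight, ih, vertexWeight_one, IsBinaryWalk, htail]
    rw [stateDiff, Fintype.sum_bool]
    cases h <;> cases s 0 <;> cases t 0 <;> simp [pow_succ']

theorem transfer_one_pow (ω : K) (n m : ℕ) (s t : Fin n → Bool) :
    (transfer ω n (fun _ => 1) 1 ^ m) s t =
      ((ω - 1) ^ n) ^ m * ((walkArrays n m s t).card : K) := by
  classical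
  induction m generalizing s with
  | zero =>
    rw [pow_zero, Matrix.one_apply, walkArrays]
    split_ifs <;> simp
  | succ m ih =>
    rw [pow_succ', Matrix.mul_apply, card_walkArrays_succ, Nat.cast_sum, mul_sum]
    refine sum_congr rfl fun u _ => ?_
    rw [ih, transfer, Matrix.of_apply, rowWeight_one]
    split_ifs
    · ring
    · simp

theorem partitionFunction_one_eq_card (ω : K) (n : ℕ) :
    partitionFunction ω n (fun _ => 1) (fun _ => 1) =
      ((ω - 1) ^ n) ^ n * ((asmFinset n).card : K) := by
  have hcard : (asmFinset n).card = (walkArrays n n (fun _ => false) fun _ => true).card := by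
    congr 1
    ext A
    exact (mem_asmFinset A).trans ((isASM_iff A).trans (mem_walkArrays _ _ A).symm)
  rw [partitionFunction, hcard, ← transfer_one_pow]
  simp

end SixVertex

theorem prod_weight_factor {ω : ℂ} (hω : ω ^ 2 + ω + 1 = 0) (n : ℕ) :
    (∏ i ∈ range n, (ω - 1) * (-ω) ^ i) * ∏ i ∈ range n, (3 : ℂ) ^ i = ((ω - 1) ^ n) ^ n := by
  induction n with
  | zero => simp
  | succ n ih =>
    have h : -ω * 3 = (ω - 1) ^ 2 := by linear_combination -hω
    rw [prod_range_succ, prod_range_succ]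
    calc _ = ((∏ i ∈ range n, (ω - 1) * (-ω) ^ i) * ∏ i ∈ range n, (3 : ℂ) ^ i) * (ω - 1) *
        (-ω * 3) ^ n := by rw [mul_pow]; ring
      _ = _ := by rw [ih, h, ← pow_mul, ← pow_mul, ← pow_mul]; ring

/-- the number of alternating sign matrices of size n is
∏_{i=0}^{n-1}(3i+1)!/(n+i)!. -/
theorem statement12 (n : ℕ) :
    ((asmFinset n).card : ℚ) =
      ∏ i ∈ Finset.range n, ((3 * i + 1).factorial : ℚ) / ((n + i).factorial : ℚ) := by
  obtain ⟨ω, hω⟩ : ∃ ω : ℂ, ω ^ 2 + ω + 1 = 0 := by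
    obtain ⟨s, hs⟩ := IsAlgClosed.exists_pow_nat_eq (-3 : ℂ) (n := 2) (by norm_num)
    exact ⟨(s - 1) / 2, by linear_combination hs / 4⟩
  have hω1 : ω - 1 ≠ 0 := by
    intro h
    rw [sub_eq_zero.1 h] at hω
    norm_num at hω
  have hZ := partitionFunction_one hω n
  rw [partitionFunction_one_eq_card] at hZ
  have hcomplex : ((asmFinset n).card : ℂ) * (∏ i ∈ range n, (3 : ℂ) ^ i) *
      diffProd (2 * n) (fun j => (j : ℂ)) = diffProd (2 * n) fun j => (gapExp j : ℂ) := by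
    refine mul_left_cancel₀ (pow_ne_zero n (pow_ne_zero n hω1)) ?_
    have hfac := prod_weight_factor hω n
    linear_combination (∏ i ∈ range n, (3 : ℂ) ^ i) * hZ +
      (diffProd (2 * n) fun j => (gapExp j : ℂ)) * hfac
  have hrat : ((asmFinset n).card : ℚ) * (∏ i ∈ range n, (3 : ℚ) ^ i) *
      diffProd (2 * n) (fun j => (j : ℚ)) = diffProd (2 * n) fun j => (gapExp j : ℚ) := by
    apply Rat.cast_injective (α := ℂ)
    simp only [diffProd] at hcomplex ⊢
    push_cast
    exact hcomplex
  rw [diffProd_gapExp, mul_assoc, mul_assoc] at hrat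
  refine mul_right_cancel₀ ?_ hrat
  refine mul_ne_zero (prod_ne_zero_iff.2 fun i _ => by positivity) ?_
  refine prod_ne_zero_iff.2 fun j _ => prod_ne_zero_iff.2 fun i hi => ?_
  rw [sub_ne_zero]
  beta_reduce
  exact_mod_cast (mem_range.1 hi).ne'

end
end
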